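/- arXiv:2602.04558 — 12 statements merged into one kernel-verified Lean document; each statement's English description precedes it below -/
import Mathlib

section
/- Let q be a prime power and let σ be an 𝔽_q-linear automorphism of 𝔽_{q^n} (viewed as an n-dimensional vector space over 𝔽_q) of finite order t. Suppose W₁ and W₂ are σ-invariant 𝔽_q-subspaces with 𝔽_{q^n} = W₁ ⊕ W₂. If Ū₁ ⊆ W₁ is a σ-covering subspace of W₁ (that is, W₁ = ⋃_{j=0}^{t-1} σ^j(Ū₁)), then Ū₁ ⊕ W₂ is a σ-covering subspace of 𝔽_{q^n}. Consequently h_σ(𝔽_{q^n}) ≥ max{h_σ(W₁), h_σ(W₂)}. -/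
noncomputable section

/-- `U` is a `σ`-covering of the subspace `W` (with `σ` of order `t`):
the union `⋃_{j=0}^{t-1} σ^j(U)` equals `W`. -/
def IsSigmaCoveringIn {F K : Type*} [Field F] [AddCommGroup K] [Module F K]
    (σ : K ≃ₗ[F] K) (t : ℕ) (W U : Submodule F K) : Prop :=
  (⋃ j ∈ Finset.range t, ⇑(σ ^ j) '' (U : Set K)) = (W : Set K)

/-- `hSigma σ t W` is the largest possible codimension (inside `W`) of a subspace
`U ⊆ W` which is a `σ`-covering of `W`. -/
def hSigma {F K : Type*} [Field F] [AddCommGroup K] [Module F K]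
    (σ : K ≃ₗ[F] K) (t : ℕ) (W : Submodule F K) : ℕ :=
  sSup {k : ℕ | ∃ U : Submodule F K, U ≤ W ∧ IsSigmaCoveringIn σ t W U ∧
    Module.finrank F W - Module.finrank F U = k}

theorem cover_aux {F K : Type*} [Field F] [AddCommGroup K] [Module F K]
    (σ : K ≃ₗ[F] K) (t : ℕ) (hord : orderOf σ = t) (W₁ W₂ : Submodule F K)
    (hW₂ : ∀ x ∈ W₂, σ x ∈ W₂) (hsup : W₁ ⊔ W₂ = ⊤) (U₁ : Submodule F K)
    (hc : IsSigmaCoveringIn σ t W₁ U₁) : IsSigmaCoveringIn σ t ⊤ (U₁ ⊔ W₂) := by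
  unfold IsSigmaCoveringIn at *
  rw [Submodule.top_coe]
  rw [Set.eq_univ_iff_forall]
  intro x
  have hx : x ∈ W₁ ⊔ W₂ := hsup ▸ Submodule.mem_top
  obtain ⟨a, ha, b, hb, rfl⟩ := Submodule.mem_sup.mp hx
  have ha' : a ∈ (W₁ : Set K) := ha
  rw [← hc] at ha'
  simp only [Set.mem_iUnion, Finset.mem_range, Set.mem_image] at ha' ⊢
  obtain ⟨j, hj, u, hu, rfl⟩ := ha'
  have hinv : ∀ k : ℕ, (σ ^ k) b ∈ W₂ := by
    intro k
    induction k with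
    | zero => simpa using hb
    | succ k ih =>
      rw [pow_succ']
      exact hW₂ _ ih
  refine ⟨j, hj, u + (σ ^ (t - j)) b, Submodule.add_mem_sup hu (hinv _), ?_⟩
  rw [map_add]
  congr 1
  rw [← LinearEquiv.mul_apply, ← pow_add, Nat.add_sub_cancel' hj.le, ← hord, pow_orderOf_eq_one]
  rfl

theorem h_aux {F K : Type*} [Field F] [AddCommGroup K] [Module F K] [FiniteDimensional F K]
    (σ : K ≃ₗ[F] K) (t : ℕ) (hord : orderOf σ = t) (W₁ W₂ : Submodule F K)
    (hW₂ : ∀ x ∈ W₂, σ x ∈ W₂) (hdisj : W₁ ⊓ W₂ = ⊥) (hsup : W₁ ⊔ W₂ = ⊤) :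
    hSigma σ t W₁ ≤ hSigma σ t ⊤ := by
  unfold hSigma
  apply csSup_le'
  rintro k ⟨U, hU, hc, rfl⟩
  apply le_csSup
  · refine ⟨Module.finrank F (⊤ : Submodule F K), ?_⟩
    rintro k ⟨U, -, -, rfl⟩
    exact Nat.sub_le _ _
  · refine ⟨U ⊔ W₂, le_top, cover_aux σ t hord W₁ W₂ hW₂ hsup U hc, ?_⟩
    have h1 := Submodule.finrank_sup_add_finrank_inf_eq W₁ W₂
    have h2 := Submodule.finrank_sup_add_finrank_inf_eq U W₂
    have h3 : U ⊓ W₂ = ⊥ := eq_bot_iff.mpr (hdisj ▸ inf_le_inf_right _ hU)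
    rw [hdisj, hsup, finrank_bot] at h1
    rw [h3, finrank_bot] at h2
    omega

/-- Let `σ` be an `F`-linear automorphism of `K = 𝔽_{q^n}` of finite order `t`, and let
`W₁, W₂` be `σ`-invariant subspaces with `K = W₁ ⊕ W₂`.  If `Ū₁ ⊆ W₁` is a `σ`-covering
subspace of `W₁`, then `Ū₁ ⊕ W₂` is a `σ`-covering subspace of `K`.  Consequently
`h_σ(K) ≥ max{h_σ(W₁), h_σ(W₂)}`. -/
theorem stmt1 (F K : Type*) [Field F] [Fintype F] [Field K] [Algebra F K]
    (n : ℕ) (hn : 0 < n) (hrank : Module.finrank F K = n)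
    (σ : K ≃ₗ[F] K) (t : ℕ) (ht : 0 < t) (hord : orderOf σ = t)
    (W₁ W₂ : Submodule F K)
    (hW₁ : ∀ x ∈ W₁, σ x ∈ W₁) (hW₂ : ∀ x ∈ W₂, σ x ∈ W₂)
    (hdisj : W₁ ⊓ W₂ = ⊥) (hsup : W₁ ⊔ W₂ = ⊤) :
    (∀ U₁ : Submodule F K, U₁ ≤ W₁ → IsSigmaCoveringIn σ t W₁ U₁ →
      IsSigmaCoveringIn σ t ⊤ (U₁ ⊔ W₂)) ∧
    max (hSigma σ t W₁) (hSigma σ t W₂) ≤ hSigma σ t ⊤ := by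
  haveI : FiniteDimensional F K := Module.finite_of_finrank_pos (by omega)
  exact ⟨fun U₁ _ hc => cover_aux σ t hord W₁ W₂ hW₂ hsup U₁ hc,
    max_le (h_aux σ t hord W₁ W₂ hW₂ hdisj hsup)
      (h_aux σ t hord W₂ W₁ hW₁ (by rw [inf_comm, hdisj]) (by rw [sup_comm, hsup]))⟩
end
end

section
/- Let q be a prime power, let f be an irreducible polynomial of degree d over 𝔽_q, and let ω be a root of f in 𝔽_{q^d} satisfying ω^n = 1 for a positive integer n. Then {1, ω, …, ω^{d-1}} is an 𝔽_q-basis of 𝔽_q(ω) = 𝔽_{q^d}; for 1 ≤ i ≤ n write ω^i = a_{i1} + a_{i2}ω + ⋯ + a_{id}ω^{d-1} with a_{ij} ∈ 𝔽_q. Then there exists a (d−1)-dimensional 𝔽_q-subspace U of 𝔽_{q^d} such that ⋃_{i=1}^{n} ω^i U = 𝔽_{q^d} if and only if for every tuple (x₁, …, x_d) ∈ (𝔽_q^*)^d there exists an integer i with d ≤ i ≤ n such that x₁a_{i1} + x₂a_{i2} + ⋯ + x_d a_{id} = 0. -/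
noncomputable section
open Pointwise

/-- Let `f` be an irreducible polynomial of degree `d` over `F = 𝔽_q`, and let
`ω ∈ K = 𝔽_{q^d}` be a root of `f` with `ω^n = 1`.  Writing
`ω^i = a_{i1} + a_{i2}ω + ⋯ + a_{id}ω^{d-1}` for `1 ≤ i ≤ n`, there is a
`(d-1)`-dimensional `F`-subspace `U ⊆ K` with `⋃_{i=1}^{n} ω^i U = K` if and only if
for every tuple `(x₁, …, x_d)` of nonzero elements of `F` there is some `i` with
`d ≤ i ≤ n` and `x₁ a_{i1} + ⋯ + x_d a_{id} = 0`. -/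
theorem stmt2 (F K : Type*) [Field F] [Fintype F] [Field K] [Algebra F K]
    (d n : ℕ) (hd : 0 < d) (hn : 0 < n)
    (f : Polynomial F) (hf : Irreducible f) (hdeg : f.natDegree = d)
    (hrank : Module.finrank F K = d)
    (ω : K) (hω : Polynomial.aeval ω f = 0) (hωn : ω ^ n = 1)
    (a : ℕ → Fin d → F)
    (ha : ∀ i, 1 ≤ i → i ≤ n →
      ω ^ i = ∑ j : Fin d, algebraMap F K (a i j) * ω ^ (j : ℕ)) :
    (∃ U : Submodule F K, Module.finrank F U = d - 1 ∧
        (⋃ i ∈ Finset.Icc 1 n, ω ^ i • (U : Set K)) = Set.univ) ↔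
      ∀ x : Fin d → F, (∀ j, x j ≠ 0) →
        ∃ i, d ≤ i ∧ i ≤ n ∧ ∑ j : Fin d, x j * a i j = 0 := by
  have hfin : FiniteDimensional F K := Module.finite_of_finrank_pos (by omega)
  have hdm : (minpoly F ω).natDegree = d := by
    rw [← minpoly.eq_of_irreducible hf hω, Polynomial.natDegree_mul_C, hdeg]
    exact inv_ne_zero (Polynomial.leadingCoeff_ne_zero.mpr hf.ne_zero)
  have hli : LinearIndependent F (fun j : Fin d => ω ^ (j : ℕ)) := by
    have h := linearIndependent_pow (K := F) ω
    rw [hdm] at h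
    exact h
  haveI : Nonempty (Fin d) := ⟨⟨0, hd⟩⟩
  let b := basisOfLinearIndependentOfCardEqFinrank hli (by simp [hrank])
  have hb : ∀ j, b j = ω ^ (j : ℕ) := fun j => by
    simp [b, coe_basisOfLinearIndependentOfCardEqFinrank]
  have hψ : ∀ (ψ : K →ₗ[F] F) (i : ℕ), 1 ≤ i → i ≤ n →
      ψ (ω ^ i) = ∑ j : Fin d, ψ (ω ^ (j : ℕ)) * a i j := by
    intro ψ i h1 h2
    conv_lhs => rw [ha i h1 h2]
    rw [map_sum]
    refine Finset.sum_congr rfl fun j _ => ?_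
    rw [← Algebra.smul_def, map_smul, smul_eq_mul, mul_comm]
  -- every functional is a twist of a given nonzero functional
  have hsurj : ∀ φ : K →ₗ[F] F, φ ≠ 0 → ∀ ψ : K →ₗ[F] F, ∃ y : K, ∀ z, φ (z * y) = ψ z := by
    intro φ hφ ψ
    let T : K →ₗ[F] Module.Dual F K := (LinearMap.mul F K).compr₂ φ
    have hT : Function.Injective T := by
      rw [injective_iff_map_eq_zero]
      intro y hy
      by_contra hy0
      apply hφ
      ext z
      have := LinearMap.congr_fun hy (y⁻¹ * z)
      simpa [T, hy0] using this
    have hS : Function.Surjective T :=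
      (LinearMap.injective_iff_surjective_of_finrank_eq_finrank
        (Subspace.dual_finrank_eq).symm).mp hT
    obtain ⟨y, hy⟩ := hS ψ
    refine ⟨y, fun z => ?_⟩
    rw [← hy, mul_comm]
    rfl
  constructor
  · rintro ⟨U, hU, hcov⟩ x hx
    have hlt : U < ⊤ := by
      rw [lt_top_iff_ne_top]
      rintro rfl
      rw [finrank_top] at hU
      omega
    obtain ⟨φ, hφ, hUφ⟩ := Submodule.exists_le_ker_of_lt_top U hlt
    obtain ⟨y, hy⟩ := hsurj φ hφ (b.constr F x)
    have hyx : ∀ j : Fin d, b.constr F x (ω ^ (j : ℕ)) = x j := fun j => by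
      rw [← hb, Module.Basis.constr_basis]
    have hmem : y ∈ (⋃ i ∈ Finset.Icc 1 n, ω ^ i • (U : Set K)) := by
      rw [hcov]; trivial
    simp only [Set.mem_iUnion, Finset.mem_Icc] at hmem
    obtain ⟨i, ⟨h1, h2⟩, u, hu, hui⟩ := hmem
    have hz : b.constr F x (ω ^ (n - i)) = 0 := by
      rw [← hy, ← hui]
      have : ω ^ (n - i) * (ω ^ i • u) = u := by
        rw [smul_eq_mul, ← mul_assoc, ← pow_add, Nat.sub_add_cancel h2, hωn, one_mul]
      exact (congrArg φ this).trans (hUφ hu)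
    have hge : d ≤ n - i := by
      by_contra hlt'
      exact hx ⟨n - i, by omega⟩ ((hyx ⟨n - i, by omega⟩).symm.trans hz)
    refine ⟨n - i, hge, by omega, ?_⟩
    rw [hψ _ _ (by omega) (by omega)] at hz
    simpa only [hyx] using hz
  · intro H
    let φ : K →ₗ[F] F := b.coord ⟨0, hd⟩
    have hφ : φ ≠ 0 := by
      intro h
      have := LinearMap.congr_fun h (b ⟨0, hd⟩)
      simp [φ] at this
    refine ⟨LinearMap.ker φ, ?_, ?_⟩
    · have h1 := LinearMap.finrank_range_add_finrank_ker φ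
      have h2 : LinearMap.range φ = ⊤ :=
        LinearMap.range_eq_top.mpr (LinearMap.surjective hφ)
      rw [h2, finrank_top, Module.finrank_self, hrank] at h1
      omega
    · rw [Set.eq_univ_iff_forall]
      intro y
      have hk : ∃ k : ℕ, φ (ω ^ k * y) = 0 := by
        let ψ : K →ₗ[F] F := φ.comp (LinearMap.mulRight F y)
        by_cases hx : ∀ j : Fin d, ψ (ω ^ (j : ℕ)) ≠ 0
        · obtain ⟨i, h1, h2, h3⟩ := H _ hx
          rw [← hψ ψ i (by omega) h2] at h3
          exact ⟨i, h3⟩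
        · push Not at hx
          obtain ⟨j, hj⟩ := hx
          exact ⟨j, hj⟩
      obtain ⟨k, hk⟩ := hk
      have hmod : ω ^ (k % n) = ω ^ k := (pow_eq_pow_mod k hωn).symm
      have hkn := Nat.mod_lt k hn
      simp only [Set.mem_iUnion, Finset.mem_Icc]
      refine ⟨n - k % n, ⟨by omega, by omega⟩, ω ^ k * y, hk, ?_⟩
      change ω ^ (n - k % n) * (ω ^ k * y) = y
      rw [← hmod, ← mul_assoc, ← pow_add, Nat.sub_add_cancel hkn.le, hωn, one_mul]
end
end

section
/- Let p be a prime and q a power of p with q ≠ 2 and q ≠ p². Let ℓ be an odd prime and t ≥ 1 an integer such that q is a primitive root modulo ℓ^t (i.e. q generates the multiplicative group of units modulo ℓ^t). Then h_q(ℓ^t) = 0; that is, the only cyclically covering subspace of 𝔽_q^{ℓ^t} is the whole space. -/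
noncomputable section

/-- The cyclic shift operator on `Fin n → F`, sending `(a_0, …, a_{n-1})`
to `(a_{n-1}, a_0, …, a_{n-2})`. -/
def cshift (F : Type*) [Field F] (n : ℕ) : (Fin n → F) →ₗ[F] (Fin n → F) where
  toFun a := a ∘ (finRotate n).symm
  map_add' _ _ := rfl
  map_smul' _ _ := rfl

/-- A subspace `U ⊆ F^n` is cyclically covering if the union of its cyclic shifts is `F^n`. -/
def IsCyclicallyCovering {F : Type*} [Field F] {n : ℕ} (U : Submodule F (Fin n → F)) : Prop :=
  ⋃ i ∈ Finset.range n, ⇑(cshift F n ^ i) '' (U : Set (Fin n → F)) = Set.univ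

/-- `hcc F n` is the largest possible codimension of a cyclically covering subspace of `F^n`. -/
def hcc (F : Type*) [Field F] (n : ℕ) : ℕ :=
  sSup {k : ℕ | ∃ U : Submodule F (Fin n → F),
    IsCyclicallyCovering U ∧ n - Module.finrank F U = k}

open Polynomial in
/-- Over a field extension `F[X]/(Q)`, any functional is a multiple of a nonzero functional. -/
theorem aux_functional {F : Type*} [Field F] (Q : F[X]) (hQ : Irreducible Q) (hm : Q.Monic)
    (L M : F[X] →ₗ[F] F) (hL : ∀ y, L (Q * y) = 0) (hM : ∀ y, M (Q * y) = 0)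
    (h : F[X]) (hh : L h ≠ 0) : ∃ g : F[X], ∀ y, M y = L (g * y) := by
  have : Fact (Irreducible Q) := ⟨hQ⟩
  have : FiniteDimensional F (AdjoinRoot Q) := hm.finite_adjoinRoot
  have key : ∀ N : F[X] →ₗ[F] F, (∀ y, N (Q * y) = 0) →
      ∀ y, (N ∘ₗ AdjoinRoot.modByMonicHom hm) (AdjoinRoot.mk Q y) = N y := by
    intro N hN y
    rw [LinearMap.comp_apply, AdjoinRoot.modByMonicHom_mk]
    conv_rhs => rw [← modByMonic_add_div y Q, map_add, hN, add_zero]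
  set L' := L ∘ₗ AdjoinRoot.modByMonicHom hm with hL'
  set M' := M ∘ₗ AdjoinRoot.modByMonicHom hm with hM'
  let B : AdjoinRoot Q →ₗ[F] Module.Dual F (AdjoinRoot Q) :=
    (LinearMap.mul F (AdjoinRoot Q)).compr₂ L'
  have hB : ∀ a b, B a b = L' (a * b) := fun a b => rfl
  have hinj : Function.Injective B := by
    rw [injective_iff_map_eq_zero]
    intro a ha
    by_contra hne
    apply hh
    rw [← key L hL h]
    have := hB a (a⁻¹ * AdjoinRoot.mk Q h)
    rw [ha, mul_inv_cancel_left₀ hne] at this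
    exact this.symm
  have hsurj : Function.Surjective B :=
    (LinearMap.injective_iff_surjective_of_finrank_eq_finrank
      (Subspace.dual_finrank_eq).symm).1 hinj
  obtain ⟨a, ha⟩ := hsurj M'
  obtain ⟨g, rfl⟩ := AdjoinRoot.mk_surjective a
  refine ⟨g, fun y => ?_⟩
  rw [← key M hM y, ← key L hL (g * y), map_mul, ← hB, ha]

theorem aux_sum {F : Type*} [Field F] (a : F) (k : ℕ) :
    ∑ j ∈ Finset.range (2 * k + 3), (if j = 0 then a else if j = 1 then 1 else
      if j = 2 then -(a + 1) else (-1 : F) ^ j) = 0 := by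
  induction k with
  | zero => simp [Finset.sum_range_succ]
  | succ k ih =>
    rw [show 2 * (k + 1) + 3 = 2 * k + 3 + 1 + 1 by ring, Finset.sum_range_succ,
      Finset.sum_range_succ, ih]
    simp [pow_succ]

theorem aux_shift {F : Type*} [Field F] (f : ℕ → F) (l : ℕ) (hf : ∀ i, f (i + l) = f i) (i : ℕ) :
    ∑ j ∈ Finset.range l, f (i + j) = ∑ j ∈ Finset.range l, f j := by
  induction i with
  | zero => simp
  | succ i ih =>
    rw [← ih]
    have h1 := Finset.sum_range_succ (fun j => f (i + j)) l
    have h2 := Finset.sum_range_succ' (fun j => f (i + j)) l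
    rw [h1, hf, add_zero] at h2
    rw [add_right_cancel h2]
    exact Finset.sum_congr rfl fun j _ => by congr 1; ring

open Polynomial in
/-- A functional killing multiples of the cyclotomic polynomial, nonzero on all monomials. -/
theorem aux_M {F : Type*} [Field F] [Fintype F] (hq2 : Fintype.card F ≠ 2) (l : ℕ)
    (hl : l.Prime) (hlodd : Odd l) (s : ℕ) :
    ∃ M : F[X] →ₗ[F] F, (∀ y, M (cyclotomic (l ^ s) F * y) = 0) ∧ ∀ i : ℕ, M (X ^ i) ≠ 0 := by
  classical
  obtain ⟨w, hw0, hw⟩ : ∃ w : ℕ → F, (∀ i, w i ≠ 0) ∧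
      ∀ M : F[X] →ₗ[F] F, (∀ i, M (X ^ i) = w i) →
        ∀ i : ℕ, M (cyclotomic (l ^ s) F * X ^ i) = 0 := by
    rcases s with _ | s
    · refine ⟨fun _ => 1, fun _ => one_ne_zero, fun M hM i => ?_⟩
      rw [pow_zero, cyclotomic_one, sub_mul, ← pow_succ', one_mul, map_sub, hM, hM, sub_self]
    · obtain ⟨a, ha⟩ : ∃ a : F, a ∉ ({0, -1} : Finset F) := by
        by_contra! hcon
        have h1 : Fintype.card F ≤ 2 := by
          rw [← Finset.card_univ]
          exact (Finset.card_le_card (fun x _ => hcon x)).trans Finset.card_le_two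
        have h2 : 1 < Fintype.card F := Fintype.one_lt_card
        omega
      simp only [Finset.mem_insert, Finset.mem_singleton, not_or] at ha
      obtain ⟨k, hk⟩ : ∃ k, l = 2 * k + 3 := by
        obtain ⟨k, hk⟩ := hlodd
        have := hl.two_le
        exact ⟨k - 1, by omega⟩
      let c : ℕ → F := fun j => if j = 0 then a else if j = 1 then 1 else
        if j = 2 then -(a + 1) else (-1 : F) ^ j
      have hc : ∀ j, c j ≠ 0 := by
        intro j
        simp only [c]
        split_ifs
        · exact ha.1
        · exact one_ne_zero
        · intro h
          exact ha.2 (eq_neg_of_add_eq_zero_left (neg_eq_zero.1 h))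
        · exact pow_ne_zero _ (neg_ne_zero.2 one_ne_zero)
      have hcs : ∑ j ∈ Finset.range l, c j = 0 := by
        rw [hk]; exact aux_sum a k
      have hpos : 0 < l ^ s := pow_pos hl.pos s
      refine ⟨fun i => c ((i / l ^ s) % l), fun i => hc _, fun M hM i => ?_⟩
      rw [cyclotomic_prime_pow_eq_geom_sum hl, Finset.sum_mul, map_sum]
      have h1 := aux_shift (fun j => c (j % l)) l (fun i => by simp) (i / l ^ s)
      have h2 : ∑ j ∈ Finset.range l, c (j % l) = 0 := by
        rw [← hcs]
        exact Finset.sum_congr rfl fun j hj => by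
          rw [Nat.mod_eq_of_lt (Finset.mem_range.1 hj)]
      rw [h2] at h1
      rw [← h1]
      refine Finset.sum_congr rfl fun j _ => ?_
      rw [← pow_mul, ← pow_add, hM, add_comm]
      beta_reduce
      rw [Nat.add_mul_div_left _ _ hpos]
  let M : F[X] →ₗ[F] F := (basisMonomials F).constr F w
  have hM : ∀ i, M (X ^ i) = w i := by
    intro i
    have := (basisMonomials F).constr_basis F w i
    simpa only [coe_basisMonomials, monomial_one_right_eq_X_pow] using this
  refine ⟨M, fun y => ?_, fun i => by rw [hM]; exact hw0 i⟩
  induction y using Polynomial.induction_on' with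
  | add p q hp hq => rw [mul_add, map_add, hp, hq, add_zero]
  | monomial i a =>
    rw [← C_mul_X_pow_eq_monomial, mul_left_comm, C_mul', map_smul, hw M hM, smul_zero]

open Polynomial in
theorem aux_irred (F : Type*) [Field F] [Fintype F]
    (p : ℕ) (hp : p.Prime) (e : ℕ) (he : 0 < e)
    (hcard : Fintype.card F = p ^ e)
    (l : ℕ) (hl : l.Prime) (t : ℕ) (ht : 1 ≤ t)
    (hprim : orderOf ((Fintype.card F : ℕ) : ZMod (l ^ t)) = (l ^ t).totient)
    (s : ℕ) (hs : s ≤ t) : Irreducible (cyclotomic (l ^ s) F) := by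
  have : Fact p.Prime := ⟨hp⟩
  have : ∀ s, NeZero (l ^ s) := fun s => ⟨pow_ne_zero _ hl.ne_zero⟩
  have hlt : 0 < (l ^ t).totient := Nat.totient_pos.2 (pow_pos hl.pos _)
  have hunit : IsUnit ((Fintype.card F : ℕ) : ZMod (l ^ t)) := by
    have : orderOf ((Fintype.card F : ℕ) : ZMod (l ^ t)) ≠ 0 := by omega
    exact (orderOf_pos_iff.1 (Nat.pos_of_ne_zero this)).isUnit
  have hcop : p.Coprime (l ^ t) := by
    rw [ZMod.isUnit_iff_coprime, hcard] at hunit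
    exact (Nat.coprime_pow_left_iff he _ _).1 hunit
  have hdvd : l ^ s ∣ l ^ t := pow_dvd_pow l hs
  have hcops : p.Coprime (l ^ s) := hcop.coprime_dvd_right hdvd
  refine irreducible_of_dvd_cyclotomic_of_natDegree hcard hcops dvd_rfl ?_
  rw [natDegree_cyclotomic, ← ZMod.card_units_eq_totient, ← Nat.card_eq_fintype_card]
  symm
  apply orderOf_eq_card_of_zpowers_eq_top
  have htop : Subgroup.zpowers (ZMod.unitOfCoprime _ (hcop.pow_left e)) = ⊤ := by
    rw [← Subgroup.card_eq_iff_eq_top, Nat.card_zpowers, Nat.card_eq_fintype_card,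
      ZMod.card_units_eq_totient, ← hprim, ← orderOf_units, ZMod.coe_unitOfCoprime, hcard]
  have hmap : ZMod.unitsMap hdvd (ZMod.unitOfCoprime _ (hcop.pow_left e)) =
      ZMod.unitOfCoprime _ (hcops.pow_left e) := by
    ext
    rw [ZMod.unitsMap_def, Units.coe_map, ZMod.coe_unitOfCoprime, ZMod.coe_unitOfCoprime]
    exact map_natCast (ZMod.castHom hdvd (ZMod (l ^ s))) _
  rw [← hmap, ← MonoidHom.map_zpowers, htop]
  exact Subgroup.map_top_of_surjective _ (ZMod.unitsMap_surjective hdvd)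

open scoped Fin.NatCast Fin.CommRing in
theorem aux_pow_apply (F : Type*) [Field F] (n i : ℕ) (x : Fin (n + 1) → F) (j : Fin (n + 1)) :
    ((cshift F (n + 1)) ^ i) x (j + (i : Fin (n + 1))) = x j := by
  induction i generalizing j with
  | zero => simp
  | succ i ih =>
    rw [pow_succ', Module.End.mul_apply]
    change (((cshift F (n + 1)) ^ i) x) ((finRotate (n + 1)).symm _) = _
    have : (finRotate (n + 1)).symm (j + ((i + 1 : ℕ) : Fin (n + 1))) = j + (i : Fin (n + 1)) := by
      rw [Equiv.symm_apply_eq, finRotate_apply]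
      push_cast
      ring
    rw [this, ih]

open Polynomial in
open scoped Fin.NatCast Fin.CommRing in
theorem aux_main (F : Type*) [Field F] [Fintype F]
    (p : ℕ) (hp : p.Prime) (e : ℕ) (he : 0 < e)
    (hcard : Fintype.card F = p ^ e)
    (hq2 : Fintype.card F ≠ 2)
    (l : ℕ) (hl : l.Prime) (hlodd : Odd l) (t : ℕ) (ht : 1 ≤ t)
    (hprim : orderOf ((Fintype.card F : ℕ) : ZMod (l ^ t)) = (l ^ t).totient)
    (n : ℕ) (hn : l ^ t = n + 1)
    (U : Submodule F (Fin (n + 1) → F)) (hU : IsCyclicallyCovering U) : U = ⊤ := by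
  by_contra hne
  obtain ⟨φ, hφ0, hφ⟩ := Submodule.exists_le_ker_of_lt_top U (lt_top_iff_ne_top.2 hne)
  set T := cshift F (n + 1) with hT
  have hTn : T ^ (n + 1) = 1 := by
    ext1 x
    ext j
    have := aux_pow_apply F n (n + 1) (LinearMap.single F (fun _ => F) x 1) j
    simpa using this
  let δ : Fin (n + 1) → F := Pi.single 0 1
  let L : F[X] →ₗ[F] F := φ ∘ₗ (LinearMap.applyₗ δ) ∘ₗ (aeval T).toLinearMap
  have hL : ∀ g, L g = φ (aeval T g δ) := fun g => rfl
  have hTd : ∀ i : Fin (n + 1), (T ^ (i : ℕ)) δ = Pi.single i 1 := by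
    intro i
    ext j
    have := aux_pow_apply F n i δ (j - i)
    simp only [Fin.cast_val_eq_self, sub_add_cancel] at this
    rw [this]
    simp only [δ, Pi.single_apply, sub_eq_zero]
  have hL0 : ∃ g, L g ≠ 0 := by
    by_contra! hcon
    apply hφ0
    refine LinearMap.pi_ext' fun i => ?_
    ext
    have := hcon (X ^ (i : ℕ))
    rw [hL, map_pow, aeval_X, hTd] at this
    simpa using this
  let I : Ideal F[X] :=
    { carrier := {g | ∀ h, L (g * h) = 0}
      add_mem' := fun {a b} ha hb h => by rw [add_mul, map_add, ha h, hb h, add_zero]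
      zero_mem' := fun h => by rw [zero_mul, map_zero]
      smul_mem' := fun c x hx h => by
        rw [smul_eq_mul, mul_comm c x, mul_assoc]; exact hx _ }
  have hI : ∀ g, g ∈ I ↔ ∀ h, L (g * h) = 0 := fun g => Iff.rfl
  have hXI : (X ^ (n + 1) - 1 : F[X]) ∈ I := by
    intro h
    rw [hL, map_mul, map_sub, map_pow, aeval_X, hTn, map_one, sub_self, zero_mul]
    simp
  obtain ⟨d, hd⟩ := (IsPrincipalIdealRing.principal I).principal
  have hdI : ∀ g, g ∈ I ↔ d ∣ g := fun g => by
    rw [hd]; exact Ideal.mem_span_singleton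
  have hX0 : (X ^ (n + 1) - 1 : F[X]) ≠ 0 := X_pow_sub_C_ne_zero (Nat.succ_pos n) 1
  have hdX := (hdI _).1 hXI
  have hd0 : d ≠ 0 := ne_zero_of_dvd_ne_zero hX0 hdX
  have hdu : ¬ IsUnit d := by
    intro hu
    obtain ⟨g, hg⟩ := hL0
    apply hg
    have := (hI 1).1 ((hdI 1).2 hu.dvd) g
    rwa [one_mul] at this
  obtain ⟨Q, hQ, hQd⟩ := WfDvdMonoid.exists_irreducible_factor hdu hd0
  obtain ⟨s, hs, hQs⟩ : ∃ s, s ≤ t ∧ Q ∣ cyclotomic (l ^ s) F := by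
    have h1 := hQd.trans hdX
    rw [← prod_cyclotomic_eq_X_pow_sub_one (Nat.succ_pos n) F, hQ.prime.dvd_finsetProd_iff] at h1
    obtain ⟨i, hi, hiQ⟩ := h1
    rw [Nat.mem_divisors, Nat.succ_eq_add_one, ← hn, Nat.dvd_prime_pow hl] at hi
    obtain ⟨⟨s, hs, rfl⟩, -⟩ := hi
    exact ⟨s, hs, hiQ⟩
  have hirr := aux_irred F p hp e he hcard l hl t ht hprim s hs
  obtain ⟨r, hr⟩ : cyclotomic (l ^ s) F ∣ d :=
    ((hQ.associated_of_dvd hirr hQs).dvd_iff_dvd_left).1 hQd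
  obtain ⟨h, hh⟩ : ∃ h, L (r * h) ≠ 0 := by
    by_contra! hcon
    obtain ⟨k, hk⟩ := (hdI r).1 hcon
    have hr0 : r ≠ 0 := by
      rintro rfl
      exact hd0 (by rw [hr, mul_zero])
    apply hirr.not_isUnit
    refine IsUnit.of_mul_eq_one k (mul_right_cancel₀ hr0 ?_)
    rw [one_mul]
    conv_rhs => rw [hk, hr]
    ring
  obtain ⟨M, hM, hMX⟩ := aux_M (F := F) hq2 l hl hlodd s
  let L' : F[X] →ₗ[F] F := L ∘ₗ LinearMap.mulLeft F r
  have hL' : ∀ g, L' g = L (r * g) := fun g => rfl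
  obtain ⟨g, hg⟩ := aux_functional _ hirr (cyclotomic.monic _ F) L' M
    (fun y => by
      rw [hL', ← mul_assoc, mul_comm r, ← hr]
      exact (hI d).1 ((hdI d).2 dvd_rfl) y) hM h hh
  let x := aeval T (r * g) δ
  have hx : ∀ i : ℕ, φ ((T ^ i) x) ≠ 0 := by
    intro i
    have h1 := hMX i
    rw [hg, hL', hL, ← mul_assoc, mul_comm, map_mul, map_pow, aeval_X] at h1
    exact h1
  have hxU : x ∈ ⋃ i ∈ Finset.range (n + 1), ⇑(T ^ i) '' (U : Set (Fin (n + 1) → F)) := by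
    have h1 : _ = Set.univ := hU
    rw [h1]; trivial
  simp only [Set.mem_iUnion] at hxU
  obtain ⟨i, hi, u, hu, hux⟩ := hxU
  rw [Finset.mem_range] at hi
  apply hx (n + 1 - i)
  rw [← hux, ← Module.End.mul_apply, ← pow_add, Nat.sub_add_cancel hi.le, hTn]
  exact hφ hu

/-- Let `q` be a power of a prime `p` with `q ≠ 2` and `q ≠ p²`, and let `ℓ` be an odd
prime such that `q` is a primitive root modulo `ℓ^t` (`t ≥ 1`).  Then `h_q(ℓ^t) = 0`,
i.e. the only cyclically covering subspace of `𝔽_q^{ℓ^t}` is the whole space. -/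
theorem stmt3 (F : Type*) [Field F] [Fintype F]
    (p : ℕ) (hp : p.Prime) (e : ℕ) (he : 0 < e)
    (hcard : Fintype.card F = p ^ e)
    (hq2 : Fintype.card F ≠ 2) (hqp2 : Fintype.card F ≠ p ^ 2)
    (ℓ : ℕ) (hl : ℓ.Prime) (hlodd : Odd ℓ) (t : ℕ) (ht : 1 ≤ t)
    (hprim : orderOf ((Fintype.card F : ℕ) : ZMod (ℓ ^ t)) = (ℓ ^ t).totient) :
    hcc F (ℓ ^ t) = 0 ∧
      ∀ U : Submodule F (Fin (ℓ ^ t) → F), IsCyclicallyCovering U → U = ⊤ := by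
  have main : ∀ U : Submodule F (Fin (ℓ ^ t) → F), IsCyclicallyCovering U → U = ⊤ := by
    have key := aux_main F p hp e he hcard hq2 ℓ hl hlodd t ht hprim
    obtain ⟨n, hn⟩ : ∃ n, ℓ ^ t = n + 1 :=
      ⟨ℓ ^ t - 1, (Nat.sub_add_cancel (pow_pos hl.pos t)).symm⟩
    have := key n hn
    rw [hn]
    exact this
  refine ⟨?_, main⟩
  unfold hcc
  rw [← Nat.le_zero]
  refine csSup_le' ?_
  rintro k ⟨U, hU, rfl⟩
  rw [main U hU]
  simp
end
end

section
/- Let q be a prime power, n a positive integer, and let σ : 𝔽_{q^n} → 𝔽_{q^n} be the Frobenius automorphism σ(x) = x^q. For α ∈ 𝔽_{q^n}, let V_α = {x ∈ 𝔽_{q^n} : Tr(αx) = 0}, where Tr denotes the trace from 𝔽_{q^n} to 𝔽_q. If the elements α, σ(α), …, σ^{n-1}(α) are linearly independent over 𝔽_q, then V_α is not a cyclically covering subspace of 𝔽_{q^n}, i.e. ⋃_{i=0}^{n-1} σ^i(V_α) ≠ 𝔽_{q^n}. -/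
noncomputable section

/-- Let `σ : K → K`, `σ(x) = x^q`, be the Frobenius of `K = 𝔽_{q^n}` over `F = 𝔽_q`, and
for `α ∈ K` let `V_α = {x ∈ K : Tr(αx) = 0}`.  If `α, σ(α), …, σ^{n-1}(α)` are linearly
independent over `F`, then `V_α` is not a cyclically covering subspace of `K`, i.e.
`⋃_{i=0}^{n-1} σ^i(V_α) ≠ K`. -/
theorem stmt4 (F K : Type*) [Field F] [Fintype F] [Field K] [Algebra F K]
    (n : ℕ) (hn : 0 < n) (hrank : Module.finrank F K = n)
    (σ : K → K) (hσ : ∀ x, σ x = x ^ Fintype.card F)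
    (α : K)
    (hlin : LinearIndependent F (fun i : Fin n => σ^[i] α)) :
    (⋃ i ∈ Finset.range n, σ^[i] '' {x : K | Algebra.trace F K (α * x) = 0})
      ≠ Set.univ := by
  classical
  subst hrank
  have : FiniteDimensional F K := FiniteDimensional.of_finrank_pos hn
  have : Finite K := Module.finite_of_finite F
  let φ := FiniteField.frobeniusAlgEquivOfAlgebraic F K
  have hφ : ∀ x, σ x = φ x := fun x => by
    rw [hσ]; rfl
  have hmul : ∀ (i : ℕ) (x y : K), σ^[i] (x * y) = σ^[i] x * σ^[i] y := by
    intro i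
    induction i with
    | zero => intro x y; rfl
    | succ k ih =>
      intro x y
      simp only [Function.iterate_succ_apply]
      rw [hφ (x * y), map_mul, ih, hφ x, hφ y]
  have htr : ∀ (i : ℕ) (x : K), Algebra.trace F K (σ^[i] x) = Algebra.trace F K x := by
    intro i
    induction i with
    | zero => intro x; rfl
    | succ k ih =>
      intro x
      rw [Function.iterate_succ_apply, ih, hφ, Algebra.trace_eq_of_algEquiv]
  have : Nonempty (Fin (Module.finrank F K)) := ⟨⟨0, hn⟩⟩
  let b := basisOfLinearIndependentOfCardEqFinrank hlin (by simp)
  have hnd := traceForm_nondegenerate F K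
  let f : K →ₗ[F] F := b.constr F (fun _ => (1 : F))
  let y := (LinearMap.BilinForm.toDual (Algebra.traceForm F K) hnd).symm f
  have hy : ∀ z, Algebra.trace F K (y * z) = f z := fun z => by
    have := LinearMap.BilinForm.apply_toDual_symm_apply (B := Algebra.traceForm F K) (hB := hnd) f z
    rw [Algebra.traceForm_apply] at this; exact this
  intro h
  have hyu : y ∈ (Set.univ : Set K) := Set.mem_univ y
  rw [← h] at hyu
  simp only [Set.mem_iUnion, Finset.mem_range] at hyu
  obtain ⟨i, hi, x, hx, hxy⟩ := hyu
  have h1 : f (b ⟨i, hi⟩) = 1 := by simp [f, Module.Basis.constr_basis]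
  have h2 : b ⟨i, hi⟩ = σ^[i] α := by simp [b]
  rw [h2, ← hy, ← hxy, ← hmul, htr, mul_comm] at h1
  rw [Set.mem_ofPred_eq] at hx
  rw [hx] at h1
  exact zero_ne_one h1
end
end

section
/- Let q be a prime power, n a positive integer, σ : 𝔽_{q^n} → 𝔽_{q^n} the Frobenius automorphism σ(x) = x^q, and α ∈ 𝔽_{q^n}. Suppose α, σ(α), …, σ^{t-1}(α) is a maximal 𝔽_q-linearly independent subset of {α, σ(α), …, σ^{n-1}(α)}, and for t ≤ i ≤ n−1 write σ^i(α) = k_{i1}α + k_{i2}σ(α) + ⋯ + k_{it}σ^{t-1}(α) with k_{ij} ∈ 𝔽_q. Then V_α is a cyclically covering subspace of 𝔽_{q^n} if and only if for every tuple (x₁, …, x_t) ∈ (𝔽_q^*)^t there exists an integer i with t ≤ i ≤ n−1 such that k_{i1}x₁ + k_{i2}x₂ + ⋯ + k_{it}x_t = 0. -/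
noncomputable section


theorem exists_trace_dual (F K : Type*) [Field F] [Finite F] [Field K] [Algebra F K]
    [FiniteDimensional F K] (t : ℕ) (v : Fin t → K) (hv : LinearIndependent F v)
    (x : Fin t → F) : ∃ y : K, ∀ j, Algebra.trace F K (v j * y) = x j := by
  have : Finite K := Module.finite_of_finite F
  obtain ⟨f, hf⟩ := LinearMap.exists_extend ((Module.Basis.span hv).constr F x)
  have hfv : ∀ j, f (v j) = x j := by
    intro j
    have h1 := LinearMap.congr_fun hf (Module.Basis.span hv j)
    rw [Module.Basis.constr_basis] at h1
    simpa [Module.Basis.span_apply] using h1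
  refine ⟨((Algebra.traceForm F K).toDual (traceForm_nondegenerate F K)).symm f, fun j => ?_⟩
  have h2 := LinearMap.BilinForm.apply_toDual_symm_apply
    (hB := traceForm_nondegenerate F K) f (v j)
  rw [Algebra.traceForm_apply] at h2
  rw [mul_comm, h2, hfv]

/-- Let `σ : K → K`, `σ(x) = x^q`, be the Frobenius of `K = 𝔽_{q^n}` over `F = 𝔽_q`,
`α ∈ K`, and let `α, σ(α), …, σ^{t-1}(α)` be a maximal `F`-linearly independent subset of
`{α, σ(α), …, σ^{n-1}(α)}`, with `σ^i(α) = k_{i1}α + ⋯ + k_{it}σ^{t-1}(α)` for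
`t ≤ i ≤ n-1`.  Then `V_α = {x : Tr(αx) = 0}` is cyclically covering iff for every tuple
`(x₁, …, x_t)` of nonzero elements of `F` there is an `i` with `t ≤ i ≤ n-1` and
`k_{i1}x₁ + ⋯ + k_{it}x_t = 0`. -/
theorem stmt5 (F K : Type*) [Field F] [Fintype F] [Field K] [Algebra F K]
    (n : ℕ) (hn : 0 < n) (hrank : Module.finrank F K = n)
    (σ : K → K) (hσ : ∀ x, σ x = x ^ Fintype.card F)
    (α : K) (t : ℕ) (ht : 0 < t) (htn : t ≤ n)
    (hlin : LinearIndependent F (fun j : Fin t => σ^[j] α))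
    (k : ℕ → Fin t → F)
    (hk : ∀ i, t ≤ i → i ≤ n - 1 →
      σ^[i] α = ∑ j : Fin t, k i j • σ^[j] α) :
    (⋃ i ∈ Finset.range n, σ^[i] '' {x : K | Algebra.trace F K (α * x) = 0})
        = Set.univ ↔
      ∀ x : Fin t → F, (∀ j, x j ≠ 0) →
        ∃ i, t ≤ i ∧ i ≤ n - 1 ∧ ∑ j : Fin t, k i j * x j = 0 := by
  have hfd : FiniteDimensional F K := FiniteDimensional.of_finrank_pos (by omega)
  have : Finite K := Module.finite_of_finite F
  let φ : K ≃ₐ[F] K := FiniteField.frobeniusAlgEquivOfAlgebraic F K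
  have hφ : ∀ x, σ x = φ x := fun x => by
    rw [hσ]; simp [φ]
  have hφ' : σ = φ := funext hφ
  have htr : ∀ (i : ℕ) (a b : K),
      Algebra.trace F K (σ^[i] a * σ^[i] b) = Algebra.trace F K (a * b) := by
    intro i
    induction i with
    | zero => intro a b; rfl
    | succ i ih =>
      intro a b
      rw [Function.iterate_succ_apply, Function.iterate_succ_apply, ih, hφ, hφ, ← map_mul,
        Algebra.trace_eq_of_algEquiv]
  have hsurj : ∀ i : ℕ, Function.Surjective σ^[i] := fun i =>
    Function.Surjective.iterate (by rw [hφ']; exact φ.surjective) i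
  have hcov : (⋃ i ∈ Finset.range n, σ^[i] '' {x : K | Algebra.trace F K (α * x) = 0})
        = Set.univ ↔ ∀ y : K, ∃ i, i < n ∧ Algebra.trace F K (σ^[i] α * y) = 0 := by
    rw [Set.eq_univ_iff_forall]
    refine forall_congr' fun y => ?_
    simp only [Set.mem_iUnion, Finset.mem_range, Set.mem_image, Set.mem_setOf_eq, exists_prop]
    refine exists_congr fun i => and_congr_right fun _ => ?_
    constructor
    · rintro ⟨x, hx, rfl⟩
      rw [htr, hx]
    · intro h
      obtain ⟨x, rfl⟩ := hsurj i y
      exact ⟨x, by rwa [htr] at h, rfl⟩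
  have hki : ∀ i, t ≤ i → i ≤ n - 1 → ∀ y : K, Algebra.trace F K (σ^[i] α * y) =
      ∑ j : Fin t, k i j * Algebra.trace F K (σ^[j] α * y) := by
    intro i h1 h2 y
    rw [hk i h1 h2, Finset.sum_mul, map_sum]
    refine Finset.sum_congr rfl fun j _ => ?_
    rw [smul_mul_assoc, map_smul, smul_eq_mul]
  rw [hcov]
  constructor
  · intro h x hx
    obtain ⟨y, hy⟩ := exists_trace_dual F K t _ hlin x
    obtain ⟨i, hi, h0⟩ := h y
    have hti : t ≤ i := by
      by_contra hlt
      exact hx ⟨i, by omega⟩ (by rw [← hy]; exact h0)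
    refine ⟨i, hti, by omega, ?_⟩
    rw [hki i hti (by omega)] at h0
    rw [← h0]
    exact Finset.sum_congr rfl fun j _ => by rw [← hy j]
  · intro h y
    by_cases hz : ∃ j : Fin t, Algebra.trace F K (σ^[j] α * y) = 0
    · obtain ⟨j, hj⟩ := hz
      exact ⟨j, by omega, hj⟩
    · push Not at hz
      obtain ⟨i, h1, h2, h3⟩ := h (fun j => Algebra.trace F K (σ^[j] α * y)) hz
      exact ⟨i, by omega, by rw [hki i h1 h2]; exact h3⟩
end
end

section
/- Let q be a prime power and let t, n, N be positive integers satisfying nN = q^t − 1. Let g be a generator of the multiplicative group 𝔽_{q^t}^* and set ω = g^N (so that ω^n = 1). If the integers ((q^t − 1)/(q − 1))·i + N·j, for 0 ≤ i ≤ q − 2 and 0 ≤ j ≤ n − 1, form a complete residue system modulo q^t − 1, then 𝔽_{q^t} = ⋃_{j=0}^{n-1} ω^j · 𝔽_q; that is, the one-dimensional 𝔽_q-subspace 𝔽_q ⊆ 𝔽_{q^t} covers all of 𝔽_{q^t} under multiplication by the powers of ω. -/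
noncomputable section
open Pointwise

lemma mem_range_of_pow_card {F K : Type*} [Field F] [Fintype F] [Field K] [Algebra F K]
    (y : K) (hy : y ^ Fintype.card F = y) : y ∈ Set.range (algebraMap F K) := by
  have h1 : (Polynomial.X ^ Fintype.card F - Polynomial.X : Polynomial F) =
      ∏ a : F, (Polynomial.X - Polynomial.C a) := by
    have hr := FiniteField.roots_X_pow_card_sub_X F
    have hd := FiniteField.X_pow_card_sub_X_natDegree_eq F (Fintype.one_lt_card (α := F))
    have hm : (Polynomial.X ^ Fintype.card F - Polynomial.X : Polynomial F).Monic :=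
      Polynomial.monic_X_pow_sub (by
        rw [Polynomial.degree_X]; exact_mod_cast Fintype.one_lt_card (α := F))
    have := Polynomial.prod_multiset_X_sub_C_of_monic_of_roots_card_eq hm (by
      rw [hr, hd]; rfl)
    rw [hr] at this
    exact this.symm
  have h2 := congrArg (Polynomial.aeval y) h1
  simp only [map_sub, map_pow, Polynomial.aeval_X, map_prod, Polynomial.aeval_C, hy, sub_self] at h2
  obtain ⟨a, -, ha⟩ := Finset.prod_eq_zero_iff.mp h2.symm
  exact ⟨a, (sub_eq_zero.mp ha).symm⟩

/-- Let `q` be a prime power and `t, n, N` positive integers with `nN = q^t - 1`.  Let `g`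
be a generator of `K^* = 𝔽_{q^t}^*` and `ω = g^N` (so `ω^n = 1`).  If the integers
`((q^t-1)/(q-1))·i + N·j` for `0 ≤ i ≤ q-2`, `0 ≤ j ≤ n-1` form a complete residue system
modulo `q^t - 1`, then `𝔽_{q^t} = ⋃_{j=0}^{n-1} ω^j · 𝔽_q`. -/
theorem stmt7 (F K : Type*) [Field F] [Fintype F] [Field K] [Fintype K] [Algebra F K]
    (t n N : ℕ) (ht : 0 < t) (hn : 0 < n) (hN : 0 < N)
    (hrank : Module.finrank F K = t)
    (hnN : n * N = Fintype.card F ^ t - 1)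
    (g : Kˣ) (hg : ∀ x : Kˣ, x ∈ Subgroup.zpowers g)
    (ω : K) (hω : ω = (g : K) ^ N)
    (hres : Function.Bijective (fun p : Fin (Fintype.card F - 1) × Fin n =>
      ((((Fintype.card F ^ t - 1) / (Fintype.card F - 1)) * (p.1 : ℕ)
          + N * (p.2 : ℕ) : ℕ) : ZMod (Fintype.card F ^ t - 1)))) :
    (⋃ j ∈ Finset.range n, ω ^ j • Set.range (algebraMap F K)) = Set.univ := by
  classical
  have hcard : Fintype.card K = Fintype.card F ^ t := by
    rw [← hrank]; exact Module.card_eq_pow_finrank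
  have hgK : (g : K) ^ (Fintype.card F ^ t - 1) = 1 := by
    rw [← hcard]; exact FiniteField.pow_card_sub_one_eq_one _ g.ne_zero
  have hgU : g ^ (Fintype.card F ^ t - 1) = 1 := by
    ext; push_cast; exact hgK
  have hdvd : Fintype.card F - 1 ∣ Fintype.card F ^ t - 1 := by
    simpa using Nat.sub_dvd_pow_sub_pow (Fintype.card F) 1 t
  rw [Set.eq_univ_iff_forall]
  intro x
  simp only [Set.mem_iUnion, Finset.mem_range]
  by_cases hx : x = 0
  · exact ⟨0, hn, Set.mem_smul_set.mpr ⟨0, ⟨0, map_zero _⟩, by simp [hx]⟩⟩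
  obtain ⟨k, hk⟩ := Submonoid.mem_powers_iff _ _ |>.mp
    (mem_powers_iff_mem_zpowers.mpr (hg (Units.mk0 x hx)))
  obtain ⟨⟨i, j⟩, hij⟩ := hres.2 (k : ZMod _)
  have hmod := (ZMod.natCast_eq_natCast_iff _ _ _).mp hij
  have hpow := pow_eq_pow_iff_modEq.mpr (hmod.of_dvd (orderOf_dvd_of_pow_eq_one hgU))
  rw [hk] at hpow
  have hpow' := congrArg (Units.val) hpow
  push_cast at hpow'
  refine ⟨j, j.2, Set.mem_smul_set.mpr ⟨((g : K) ^ ((Fintype.card F ^ t - 1) /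
    (Fintype.card F - 1) * (i : ℕ))), ?_, ?_⟩⟩
  · apply mem_range_of_pow_card
    have h1 : Fintype.card F = (Fintype.card F - 1) + 1 := by
      have := Fintype.card_pos (α := F); omega
    generalize (i : ℕ) = a
    generalize hM : (Fintype.card F ^ t - 1) / (Fintype.card F - 1) = M
    have h2 : M * (Fintype.card F - 1) = Fintype.card F ^ t - 1 := by
      rw [← hM]; exact Nat.div_mul_cancel hdvd
    have h3 : ((g : K) ^ (M * a)) ^ (Fintype.card F - 1 + 1) = (g : K) ^ (M * a) := by
      rw [pow_succ, ← pow_mul, mul_right_comm, h2, pow_mul (g : K) (_ - 1), hgK, one_pow, one_mul]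
    rwa [← h1] at h3
  · rw [hω, smul_eq_mul, ← pow_mul, mul_comm, ← pow_add]
    simpa using hpow'
end
end

section
/- Let q be a prime power and n a positive integer with gcd(q, n) = 1. Let m = ord_n(q) be the multiplicative order of q modulo n, and set N = (q^m − 1)/n. If gcd(n, N) = 1, then h_q(n) ≥ m − ord_N(q), where ord_N(q) is the multiplicative order of q modulo N. -/
noncomputable section

/-- The map `a ↦ ∑ a_i β^i`. -/
def evalMap (F : Type*) [Field F] {K : Type*} [Field K] [Algebra F K] (n : ℕ) (β : K) :
    (Fin n → F) →ₗ[F] K where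
  toFun a := ∑ i, a i • β ^ (i : ℕ)
  map_add' a b := by simp [add_smul, Finset.sum_add_distrib]
  map_smul' c a := by simp [mul_smul, Finset.smul_sum]

theorem evalMap_apply (F : Type*) [Field F] {K : Type*} [Field K] [Algebra F K] (n : ℕ) (β : K)
    (a : Fin n → F) : evalMap F n β a = ∑ i, a i • β ^ (i : ℕ) := rfl

theorem evalMap_cshift (F : Type*) [Field F] {K : Type*} [Field K] [Algebra F K] (n : ℕ) (β : K)
    (hβ : β ^ n = 1) (a : Fin n → F) :
    evalMap F n β (cshift F n a) = β * evalMap F n β a := by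
  rw [evalMap_apply, evalMap_apply, Finset.mul_sum, ← Equiv.sum_comp (finRotate n)]
  refine Finset.sum_congr rfl fun i _ => ?_
  have h1 : cshift F n a (finRotate n i) = a i :=
    congrArg a ((finRotate n).symm_apply_apply i)
  rw [h1, mul_smul_comm]
  congr 1
  cases n with
  | zero => exact i.elim0
  | succ k =>
    rw [coe_finRotate]
    split_ifs with h
    · subst h
      rw [Fin.val_last, ← pow_succ', hβ, pow_zero]
    · rw [pow_succ']

theorem evalMap_cshift_pow (F : Type*) [Field F] {K : Type*} [Field K] [Algebra F K] (n : ℕ)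
    (β : K) (hβ : β ^ n = 1) (i : ℕ) (a : Fin n → F) :
    evalMap F n β ((cshift F n ^ i) a) = β ^ i * evalMap F n β a := by
  induction i with
  | zero => simp
  | succ k ih =>
    rw [pow_succ', Module.End.mul_apply, evalMap_cshift F n β hβ, ih, pow_succ', mul_assoc]

theorem cshift_pow_surjective (F : Type*) [Field F] (n i : ℕ) :
    Function.Surjective (cshift F n ^ i) := by
  rw [Module.End.coe_pow]
  refine Function.Surjective.iterate (fun a => ⟨a ∘ finRotate n, ?_⟩) i
  ext j
  exact congrArg a ((finRotate n).apply_symm_apply j)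

theorem evalMap_surjective (F : Type*) [Field F] [Fintype F] {K : Type*} [Field K] [Algebra F K]
    [Finite K] (n : ℕ) (hn : 0 < n) (β : K) (hβ : orderOf β = n)
    (hr : Module.finrank F K = orderOf ((Fintype.card F : ℕ) : ZMod n)) :
    Function.Surjective (evalMap F n β) := by
  have hβ1 : β ^ n = 1 := hβ ▸ pow_orderOf_eq_one β
  have htop : IntermediateField.adjoin F {β} = ⊤ := by
    set E := IntermediateField.adjoin F {β} with hE
    have : Fintype E := Fintype.ofFinite E
    have hcard : Fintype.card E = Fintype.card F ^ Module.finrank F E :=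
      Module.card_eq_pow_finrank
    let b : E := ⟨β, IntermediateField.mem_adjoin_simple_self F β⟩
    have hb : β ^ (Fintype.card F ^ Module.finrank F E) = β := by
      have := FiniteField.pow_card b
      rw [hcard] at this
      exact congrArg Subtype.val this
    have hβ0 : β ≠ 0 := by
      rintro rfl
      rw [zero_pow hn.ne'] at hβ1
      exact zero_ne_one hβ1
    have hpos : 0 < Fintype.card F ^ Module.finrank F E := pow_pos Fintype.card_pos _
    have hb2 : β ^ (Fintype.card F ^ Module.finrank F E - 1) = 1 := by
      apply mul_right_cancel₀ hβ0
      rw [← pow_succ, Nat.sub_add_cancel hpos, hb, one_mul]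
    have hdvd := orderOf_dvd_of_pow_eq_one hb2
    rw [hβ] at hdvd
    have hz : ((Fintype.card F : ℕ) : ZMod n) ^ Module.finrank F E = 1 := by
      have := (ZMod.natCast_eq_zero_iff _ _).2 hdvd
      rw [Nat.cast_sub hpos] at this
      push_cast at this
      exact sub_eq_zero.1 this
    have h2 := orderOf_dvd_of_pow_eq_one hz
    rw [← hr] at h2
    have h3 := Nat.le_of_dvd Module.finrank_pos h2
    exact IntermediateField.eq_of_le_of_finrank_le le_top
      (by rw [IntermediateField.finrank_top']; exact h3)
  have hadj : Algebra.adjoin F {β} = ⊤ := by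
    rw [← IntermediateField.adjoin_simple_toSubalgebra_of_isAlgebraic
      (Algebra.IsAlgebraic.isAlgebraic β), htop, IntermediateField.top_toSubalgebra]
  rw [← LinearMap.range_eq_top, ← Algebra.top_toSubmodule, ← hadj]
  apply le_antisymm
  · rw [hadj]; exact le_top
  rw [Algebra.adjoin_eq_span, Submodule.span_le]
  intro x hx
  obtain ⟨k, rfl⟩ := Submonoid.mem_closure_singleton.1 hx
  refine ⟨Pi.single ⟨k % n, Nat.mod_lt _ hn⟩ 1, ?_⟩
  rw [evalMap_apply, Finset.sum_eq_single ⟨k % n, Nat.mod_lt _ hn⟩]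
  · simp only [Pi.single_eq_same, one_smul]
    rw [← hβ, pow_mod_orderOf]
  · intro j _ hj
    simp [Pi.single_eq_of_ne hj]
  · simp

theorem finrank_fixed_le (F : Type*) [Field F] [Fintype F] {K : Type*} [Field K] [Algebra F K]
    [Finite K] (d : ℕ) (hd : 0 < d) (L : Submodule F K)
    (hL : ∀ x ∈ L, x ^ Fintype.card F ^ d = x) : Module.finrank F L ≤ d := by
  classical
  have : Fintype L := Fintype.ofFinite L
  have hcard : Fintype.card L = Fintype.card F ^ Module.finrank F L :=
    Module.card_eq_pow_finrank
  have h1 : 1 < Fintype.card F := Fintype.one_lt_card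
  let P : Polynomial K := Polynomial.X ^ Fintype.card F ^ d - Polynomial.X
  have hP : P ≠ 0 := FiniteField.X_pow_card_pow_sub_X_ne_zero _ hd.ne' h1
  have hdeg : P.natDegree = Fintype.card F ^ d :=
    FiniteField.X_pow_card_pow_sub_X_natDegree_eq _ hd.ne' h1
  have hle : Fintype.card L ≤ P.roots.toFinset.card := by
    rw [← Finset.card_univ]
    refine Finset.card_le_card_of_injOn (fun x : L => (x : K)) ?_ Subtype.val_injective.injOn
    intro x _
    simp only [Finset.mem_coe, Multiset.mem_toFinset]
    rw [Polynomial.mem_roots hP]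
    simp [P, Polynomial.IsRoot, hL x.1 x.2]
  have h2 : Fintype.card F ^ Module.finrank F L ≤ Fintype.card F ^ d := by
    rw [← hcard, ← hdeg]
    exact hle.trans ((Multiset.toFinset_card_le _).trans (Polynomial.card_roots' _))
  exact (Nat.pow_le_pow_iff_right h1).1 h2

theorem decomp {K : Type*} [Field K] [Finite K] (n N : ℕ) (hn : 0 < n) (hgcd : Nat.gcd n N = 1)
    (hK : Nat.card K = n * N + 1) (β : K) (hβ : orderOf β = n) (x : K) (hx : x ≠ 0) :
    ∃ i < n, ∃ γ : K, γ ^ N = 1 ∧ x = β ^ i * γ := by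
  have : Fintype K := Fintype.ofFinite K
  have hx1 : x ^ (n * N) = 1 := by
    have := FiniteField.pow_card_sub_one_eq_one x hx
    rwa [← Nat.card_eq_fintype_card, hK, Nat.add_sub_cancel] at this
  have hbez := Nat.gcd_eq_gcd_ab n N
  rw [hgcd] at hbez
  have hprim : IsPrimitiveRoot β n := hβ ▸ IsPrimitiveRoot.orderOf β
  have hz : x ^ ((n : ℤ) * N) = 1 := by exact_mod_cast hx1
  have : NeZero n := ⟨hn.ne'⟩
  obtain ⟨i, hi, hix⟩ := hprim.eq_pow_of_pow_eq_one (ξ := x ^ ((N : ℤ) * Nat.gcdB n N)) (by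
    rw [← zpow_natCast, ← zpow_mul,
      show (N : ℤ) * Nat.gcdB n N * n = (n * N) * Nat.gcdB n N by ring, zpow_mul, hz, one_zpow])
  refine ⟨i, hi, x ^ ((n : ℤ) * Nat.gcdA n N), ?_, ?_⟩
  · rw [← zpow_natCast, ← zpow_mul,
      show (n : ℤ) * Nat.gcdA n N * N = (n * N) * Nat.gcdA n N by ring, zpow_mul, hz, one_zpow]
  · rw [hix, ← zpow_add₀ hx, add_comm, ← hbez]
    simp

/-- Let `q` be a prime power, `n` positive with `gcd(q, n) = 1`, `m = ord_n(q)` and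
`N = (q^m - 1)/n`.  If `gcd(n, N) = 1`, then `h_q(n) ≥ m - ord_N(q)`. -/
theorem stmt8 (F : Type*) [Field F] [Fintype F]
    (n : ℕ) (hn : 0 < n) (hqn : Nat.gcd (Fintype.card F) n = 1)
    (m N : ℕ) (hm : m = orderOf ((Fintype.card F : ℕ) : ZMod n))
    (hN : n * N = Fintype.card F ^ m - 1)
    (hgcd : Nat.gcd n N = 1) :
    m - orderOf ((Fintype.card F : ℕ) : ZMod N) ≤ hcc F n := by
  classical
  set q := Fintype.card F with hq
  have hq1 : 1 < q := Fintype.one_lt_card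
  have : NeZero n := ⟨hn.ne'⟩
  have hm0 : 0 < m := by
    have h := orderOf_pos (ZMod.unitOfCoprime q hqn)
    rw [← orderOf_units, ZMod.coe_unitOfCoprime, ← hm] at h
    exact h
  have : NeZero m := ⟨hm0.ne'⟩
  have hqm : 1 < q ^ m := Nat.one_lt_pow hm0.ne' hq1
  have hqN : q ^ m = n * N + 1 := by omega
  have hNz : (q : ZMod N) ^ m = 1 := by
    have : ((q ^ m : ℕ) : ZMod N) = ((n * N + 1 : ℕ) : ZMod N) := by rw [hqN]
    simpa using this
  set d := orderOf (q : ZMod N) with hd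
  have hd0 : 0 < d := orderOf_pos_iff.2 (isOfFinOrder_iff_pow_eq_one.2 ⟨m, hm0, hNz⟩)
  have hdN : N ∣ q ^ d - 1 := by
    rw [← ZMod.natCast_eq_zero_iff, Nat.cast_sub (Nat.one_le_pow _ _ (by omega))]
    push_cast
    rw [hd, pow_orderOf_eq_one, sub_self]
  obtain ⟨p, hp⟩ := CharP.exists F
  have : Fact p.Prime := ⟨CharP.char_is_prime F p⟩
  let K := FiniteField.Extension F p m
  have hKr : Module.finrank F K = m := FiniteField.finrank_extension F p m
  have hKc : Nat.card K = n * N + 1 := by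
    rw [← hqN, hq, ← Nat.card_eq_fintype_card]
    exact FiniteField.natCard_extension F p m
  obtain ⟨β, hβ⟩ : ∃ β : K, orderOf β = n := by
    obtain ⟨g, hg⟩ := IsCyclic.exists_ofOrder_eq_natCard (α := Kˣ)
    rw [Nat.card_units, hKc, Nat.add_sub_cancel] at hg
    have hN0 : N ≠ 0 := by
      rintro rfl
      omega
    refine ⟨((g ^ N : Kˣ) : K), ?_⟩
    rw [orderOf_units, orderOf_pow_of_dvd hN0 (by rw [hg]; exact dvd_mul_left _ _), hg,
      Nat.mul_div_cancel _ (Nat.pos_of_ne_zero hN0)]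
  have hβ1 : β ^ n = 1 := hβ ▸ pow_orderOf_eq_one β
  have hsurj := evalMap_surjective F n hn β hβ (hKr.trans hm)
  let L : Submodule F K := LinearMap.ker
    (((FiniteField.frobeniusAlgHom F K ^ d : K →ₐ[F] K) : K →ₗ[F] K) - LinearMap.id)
  have hmem : ∀ x : K, x ∈ L ↔ x ^ q ^ d = x := by
    intro x
    have h : (FiniteField.frobeniusAlgHom F K ^ d) x = x ^ q ^ d := by
      rw [AlgHom.coe_pow, FiniteField.coe_frobeniusAlgHom, pow_iterate]
    rw [← h]
    simp only [L, LinearMap.mem_ker, LinearMap.sub_apply, sub_eq_zero, LinearMap.id_apply]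
    rfl
  have hLd := finrank_fixed_le F d hd0 L (fun x hx => (hmem x).1 hx)
  let ψ : (Fin n → F) →ₗ[F] K ⧸ L := L.mkQ ∘ₗ evalMap F n β
  have hψ : LinearMap.range ψ = ⊤ :=
    LinearMap.range_eq_top.2 ((Submodule.mkQ_surjective L).comp hsurj)
  have hker : ∀ a, a ∈ LinearMap.ker ψ ↔ evalMap F n β a ∈ L := by
    intro a
    simp [ψ]
  have hrank := LinearMap.finrank_range_add_finrank_ker ψ
  rw [hψ, finrank_top, Module.finrank_fin_fun] at hrank
  have hquot := Submodule.finrank_quotient_add_finrank L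
  rw [hKr] at hquot
  have hcov : IsCyclicallyCovering (LinearMap.ker ψ) := by
    rw [IsCyclicallyCovering, Set.eq_univ_iff_forall]
    intro a
    have key : ∃ i < n, ∃ γ ∈ L, evalMap F n β a = β ^ i * γ := by
      by_cases hx : evalMap F n β a = 0
      · exact ⟨0, hn, 0, L.zero_mem, by simp [hx]⟩
      · obtain ⟨i, hi, γ, hγ, h⟩ := decomp n N hn hgcd hKc β hβ _ hx
        refine ⟨i, hi, γ, ?_, h⟩
        rw [hmem]
        obtain ⟨c, hc⟩ := hdN
        have : q ^ d = N * c + 1 := by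
          have := Nat.one_le_pow d q (by omega)
          omega
        rw [this, pow_succ, pow_mul, hγ, one_pow, one_mul]
    obtain ⟨i, hi, γ, hγ, h⟩ := key
    obtain ⟨b, hb⟩ := cshift_pow_surjective F n i a
    simp only [Set.mem_iUnion]
    refine ⟨i, Finset.mem_range.2 hi, b, ?_, hb⟩
    have hβ0 : β ≠ 0 := by
      intro h0
      rw [h0, zero_pow hn.ne'] at hβ1
      exact zero_ne_one hβ1
    rw [← hb, evalMap_cshift_pow F n β hβ1] at h
    have := mul_left_cancel₀ (pow_ne_zero i hβ0) h
    exact (hker b).2 (this ▸ hγ)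
  have hle : n - Module.finrank F (LinearMap.ker ψ) ≤ hcc F n := by
    refine le_csSup ⟨n, ?_⟩ ⟨LinearMap.ker ψ, hcov, rfl⟩
    rintro k ⟨U, _, rfl⟩
    exact Nat.sub_le _ _
  omega
end
end

section
/- Let q be a power of an odd prime and let n be an odd positive integer. If h_q(n) = 0, then h_q(2n) = 0. -/
noncomputable section

theorem finRotate_val_mod (n : ℕ) (j : Fin n) : (finRotate n j).val = (j.val + 1) % n := by
  cases n with
  | zero => exact j.elim0
  | succ m => rw [finRotate_apply, Fin.val_add]; simp

theorem finRotate_pow_val (n k : ℕ) (j : Fin n) :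
    ((finRotate n ^ k) j).val = (j.val + k) % n := by
  induction k with
  | zero => simp [Nat.mod_eq_of_lt j.isLt]
  | succ k ih =>
    rw [pow_succ', Equiv.Perm.mul_apply, finRotate_val_mod, ih]
    simp [Nat.add_assoc]

theorem cshift_rot (F : Type*) [Field F] (n : ℕ) (a : Fin n → F) (j : Fin n) :
    cshift F n a (finRotate n j) = a j := by
  change a ((finRotate n).symm (finRotate n j)) = a j
  rw [Equiv.symm_apply_apply]

theorem cshift_pow_rot (F : Type*) [Field F] (n k : ℕ) (a : Fin n → F) (j : Fin n) :
    (cshift F n ^ k) a ((finRotate n ^ k) j) = a j := by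
  induction k with
  | zero => simp
  | succ k ih =>
    rw [pow_succ', pow_succ', Equiv.Perm.mul_apply, Module.End.mul_apply, cshift_rot, ih]

theorem cshift_pow_self (F : Type*) [Field F] (n : ℕ) : cshift F n ^ n = 1 := by
  ext1 i
  ext1
  ext j
  have h := cshift_pow_rot F n n (Pi.single i 1) j
  have h2 : (finRotate n ^ n) j = j := by
    ext; rw [finRotate_pow_val]; simp [Nat.mod_eq_of_lt j.isLt]
  rw [h2] at h
  simpa using h

theorem cshift_bij (F : Type*) [Field F] (n : ℕ) (k : ℕ) :
    Function.Bijective (cshift F n ^ k) := by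
  have h : Function.Bijective (cshift F n) := by
    constructor
    · intro a b hab
      funext j
      rw [← cshift_rot F n a j, ← cshift_rot F n b j, hab]
    · intro a
      refine ⟨a ∘ finRotate n, ?_⟩
      funext j
      change a (finRotate n ((finRotate n).symm j)) = a j
      rw [Equiv.apply_symm_apply]
  rw [Module.End.coe_pow]
  exact h.iterate k

theorem covering_iff {F : Type*} [Field F] {n : ℕ} (U : Submodule F (Fin n → F)) :
    IsCyclicallyCovering U ↔ ∀ a, ∃ i < n, ∃ u ∈ U, (cshift F n ^ i) u = a := by
  unfold IsCyclicallyCovering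
  rw [Set.eq_univ_iff_forall]
  simp

theorem hcc_zero_iff (F : Type*) [Field F] (n : ℕ) :
    hcc F n = 0 ↔ ∀ U : Submodule F (Fin n → F), IsCyclicallyCovering U → U = ⊤ := by
  have key : ∀ U : Submodule F (Fin n → F), U = ⊤ ↔ n - Module.finrank F U = 0 := by
    intro U
    constructor
    · rintro rfl
      simp
    · intro h
      apply Submodule.eq_top_of_finrank_eq
      have := Submodule.finrank_le U
      simp only [Module.finrank_fin_fun] at this ⊢
      omega
  constructor
  · intro h U hU
    rw [key, ← Nat.le_zero, ← h]
    refine le_csSup ⟨n, ?_⟩ ⟨U, hU, rfl⟩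
    rintro k ⟨V, -, rfl⟩
    exact Nat.sub_le _ _
  · intro h
    rw [← Nat.le_zero]
    apply csSup_le'
    rintro k ⟨V, hV, rfl⟩
    exact ((key V).1 (h V hV)).le

theorem covering_comap {F : Type*} [Field F] {n N : ℕ} (hn : 0 < n)
    (E : (Fin n → F) →ₗ[F] (Fin N → F)) (s : F) (hs : s ≠ 0)
    (hE : ∀ a, cshift F N (E a) = s • E (cshift F n a))
    (U : Submodule F (Fin N → F)) (hU : IsCyclicallyCovering U) :
    IsCyclicallyCovering (U.comap E) := by
  rw [covering_iff] at hU ⊢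
  intro a
  obtain ⟨i, -, u, hu, hua⟩ := hU (E a)
  obtain ⟨b, rfl⟩ := (cshift_bij F n i).2 a
  have hk : ∀ k, (cshift F N ^ k) (E b) = s ^ k • E ((cshift F n ^ k) b) := by
    intro k
    induction k with
    | zero => simp
    | succ k ih =>
      rw [pow_succ', Module.End.mul_apply, ih, map_smul, hE, smul_smul, pow_succ' (cshift F n),
        Module.End.mul_apply, pow_succ]
  refine ⟨i % n, Nat.mod_lt _ hn, b, ?_, ?_⟩
  · have h1 : E b = s ^ i • u := by
      apply (cshift_bij F N i).1
      rw [hk, map_smul, hua]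
    rw [Submodule.mem_comap, h1]
    exact U.smul_mem _ hu
  · conv_rhs => rw [← Nat.mod_add_div i n, pow_add, pow_mul, cshift_pow_self, one_pow, mul_one]

/-- `E s a j = s ^ j * a (j mod n)`. -/
def twistE (F : Type*) [Field F] (n : ℕ) (hn : 0 < n) (s : F) :
    (Fin n → F) →ₗ[F] (Fin (2 * n) → F) where
  toFun a j := s ^ j.val * a ⟨j.val % n, Nat.mod_lt _ hn⟩
  map_add' a b := by funext j; simp [mul_add]
  map_smul' c a := by funext j; simp [mul_left_comm]

theorem twistE_shift (F : Type*) [Field F] (n : ℕ) (hn : 0 < n) (s : F) (hs : s * s = 1)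
    (a : Fin n → F) :
    cshift F (2 * n) (twistE F n hn s a) = s • twistE F n hn s (cshift F n a) := by
  funext j
  obtain ⟨j, rfl⟩ := (finRotate (2 * n)).surjective j
  rw [cshift_rot]
  have h1 : (⟨(finRotate (2 * n) j).val % n, Nat.mod_lt _ hn⟩ : Fin n)
      = finRotate n ⟨j.val % n, Nat.mod_lt _ hn⟩ := by
    ext
    rw [finRotate_val_mod, finRotate_val_mod]
    simp
  have hs2 : s ^ (2 * n) = 1 := by rw [pow_mul, pow_two, hs, one_pow]
  have h2 : s ^ (finRotate (2 * n) j).val = s ^ (j.val + 1) := by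
    rw [finRotate_val_mod]
    conv_rhs => rw [← Nat.mod_add_div (j.val + 1) (2 * n), pow_add, pow_mul, hs2, one_pow, mul_one]
  simp only [twistE, LinearMap.coe_mk, AddHom.coe_mk, Pi.smul_apply, smul_eq_mul]
  rw [h1, h2, cshift_rot, pow_succ]
  linear_combination (-(s ^ j.val * a ⟨j.val % n, Nat.mod_lt _ hn⟩)) * hs

/-- Let `q` be a power of an odd prime and `n` an odd positive integer.
If `h_q(n) = 0`, then `h_q(2n) = 0`. -/
theorem stmt11 (F : Type*) [Field F] [Fintype F]
    (hodd : Odd (Fintype.card F))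
    (n : ℕ) (hn : 0 < n) (hnodd : Odd n)
    (h0 : hcc F n = 0) :
    hcc F (2 * n) = 0 := by
  have h2 : (2 : F) ≠ 0 := by
    apply Ring.two_ne_zero
    intro hc
    have := FiniteField.even_card_of_char_two hc
    have := Nat.odd_iff.1 hodd
    omega
  rw [hcc_zero_iff] at h0 ⊢
  intro U hU
  have hmem : ∀ s : F, s * s = 1 → ∀ a, twistE F n hn s a ∈ U := by
    intro s hs a
    have hs0 : s ≠ 0 := by rintro rfl; simp at hs
    have := h0 _ (covering_comap hn (twistE F n hn s) s hs0 (twistE_shift F n hn s hs) U hU)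
    have ha : a ∈ U.comap (twistE F n hn s) := by rw [this]; trivial
    exact ha
  rw [eq_top_iff]
  intro v _
  let lo : Fin n → F := fun i => v ⟨i.val, by omega⟩
  let hi : Fin n → F := fun i => v ⟨i.val + n, by omega⟩
  have hv : v = twistE F n hn 1 (fun i => 2⁻¹ * (lo i + hi i))
      + twistE F n hn (-1) (fun i => (-1) ^ i.val * (2⁻¹ * (lo i - hi i))) := by
    funext j
    simp only [twistE, LinearMap.coe_mk, AddHom.coe_mk, Pi.add_apply, one_pow, one_mul, lo, hi]
    have hsq : ∀ k : ℕ, ((-1 : F) ^ k) * (-1) ^ k = 1 := by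
      intro k; rw [← mul_pow]; simp
    by_cases hj : j.val < n
    · simp only [Nat.mod_eq_of_lt hj]
      rw [← mul_assoc, hsq]
      field_simp
      ring
    · obtain ⟨k, hk⟩ := Nat.exists_eq_add_of_le' (not_lt.1 hj)
      have hkn : k < n := by omega
      have hm : j.val % n = k := by rw [hk, Nat.add_mod_right, Nat.mod_eq_of_lt hkn]
      have hkN : k + n < 2 * n := by omega
      have hjj : v j = v ⟨k + n, hkN⟩ := congrArg v (Fin.ext hk)
      simp only [hm]
      rw [hjj]
      simp only [hk, pow_add, hnodd.neg_one_pow]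
      rw [← mul_assoc, mul_right_comm ((-1 : F) ^ k), hsq]
      field_simp
      ring
  rw [hv]
  exact U.add_mem (hmem _ (by simp) _) (hmem _ (by simp) _)
end
end

section
/- h_3(11) = 1; that is, the largest possible codimension of a cyclically covering subspace of 𝔽_3^{11} equals 1: there exists a cyclically covering subspace of 𝔽_3^{11} of codimension 1, but none of codimension 2. -/
noncomputable section

open Matrix

abbrev V11 := Fin 11 → ZMod 3

/-- The zero sets of `y` and `g * y` are disjoint. -/
def good (g : V11) (y : V11) : Bool :=
  decide (∀ i, y i ≠ 0 ∨ (circulant g *ᵥ y) i ≠ 0)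

/-- Vectors constant on the cyclotomic classes modulo 11. -/
def idv (a b c : ZMod 3) : V11 := ![a, b, c, b, b, b, c, c, c, b, c]
def ev1 : V11 := idv 1 0 1
def enc1 (a0 a1 a2 a3 a4 : ZMod 3) : V11 :=
  ![a0, a1, a2, a3, a4,
    a0 + a1 + 2 * a2 + a3,
    a1 + a2 + 2 * a3 + a4,
    a0 + a1 + 2 * a3 + 2 * a4,
    2 * a0 + 2 * a2 + 2 * a3 + 2 * a4,
    2 * a0 + a1 + a2 + a3 + 2 * a4,
    2 * a0 + a1 + 2 * a2 + a4]
def ys1 : List V11 :=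
  [![0, 0, 1, 2, 2, 1, 1, 2, 1, 1, 1],
   ![0, 1, 0, 1, 1, 2, 1, 2, 1, 1, 2],
   ![0, 1, 1, 1, 1, 1, 2, 2, 0, 2, 1],
   ![0, 1, 1, 1, 2, 1, 0, 1, 2, 1, 2],
   ![0, 1, 1, 2, 2, 2, 2, 0, 1, 2, 2]]
theorem enc1_surj (g : V11) (h : circulant ev1 *ᵥ g = g) :
    g = enc1 (g 0) (g 1) (g 2) (g 3) (g 4) := by
  have h0 := congrFun h 0
  have h1 := congrFun h 1
  have h2 := congrFun h 2
  have h3 := congrFun h 3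
  have h4 := congrFun h 4
  have h5 := congrFun h 5
  have m0 : ev1 0 = 1 := rfl
  have m1 : ev1 1 = 0 := rfl
  have m2 : ev1 2 = 1 := rfl
  have m3 : ev1 3 = 0 := rfl
  have m4 : ev1 4 = 0 := rfl
  have m5 : ev1 5 = 0 := rfl
  have m6 : ev1 6 = 1 := rfl
  have m7 : ev1 7 = 1 := rfl
  have m8 : ev1 8 = 1 := rfl
  have m9 : ev1 9 = 0 := rfl
  have m10 : ev1 10 = 1 := rfl
  replace h0 : ev1 0 * g 0 + ev1 10 * g 1 + ev1 9 * g 2 + ev1 8 * g 3 + ev1 7 * g 4 + ev1 6 * g 5 + ev1 5 * g 6 + ev1 4 * g 7 + ev1 3 * g 8 + ev1 2 * g 9 + ev1 1 * g 10 = g 0 := by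
    have := h0
    simp only [mulVec, dotProduct, Fin.sum_univ_castSucc, Fin.sum_univ_zero, zero_add, circulant_apply] at this
    exact this
  replace h1 : ev1 1 * g 0 + ev1 0 * g 1 + ev1 10 * g 2 + ev1 9 * g 3 + ev1 8 * g 4 + ev1 7 * g 5 + ev1 6 * g 6 + ev1 5 * g 7 + ev1 4 * g 8 + ev1 3 * g 9 + ev1 2 * g 10 = g 1 := by
    have := h1
    simp only [mulVec, dotProduct, Fin.sum_univ_castSucc, Fin.sum_univ_zero, zero_add, circulant_apply] at this
    exact this
  replace h2 : ev1 2 * g 0 + ev1 1 * g 1 + ev1 0 * g 2 + ev1 10 * g 3 + ev1 9 * g 4 + ev1 8 * g 5 + ev1 7 * g 6 + ev1 6 * g 7 + ev1 5 * g 8 + ev1 4 * g 9 + ev1 3 * g 10 = g 2 := by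
    have := h2
    simp only [mulVec, dotProduct, Fin.sum_univ_castSucc, Fin.sum_univ_zero, zero_add, circulant_apply] at this
    exact this
  replace h3 : ev1 3 * g 0 + ev1 2 * g 1 + ev1 1 * g 2 + ev1 0 * g 3 + ev1 10 * g 4 + ev1 9 * g 5 + ev1 8 * g 6 + ev1 7 * g 7 + ev1 6 * g 8 + ev1 5 * g 9 + ev1 4 * g 10 = g 3 := by
    have := h3
    simp only [mulVec, dotProduct, Fin.sum_univ_castSucc, Fin.sum_univ_zero, zero_add, circulant_apply] at this
    exact this
  replace h4 : ev1 4 * g 0 + ev1 3 * g 1 + ev1 2 * g 2 + ev1 1 * g 3 + ev1 0 * g 4 + ev1 10 * g 5 + ev1 9 * g 6 + ev1 8 * g 7 + ev1 7 * g 8 + ev1 6 * g 9 + ev1 5 * g 10 = g 4 := by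
    have := h4
    simp only [mulVec, dotProduct, Fin.sum_univ_castSucc, Fin.sum_univ_zero, zero_add, circulant_apply] at this
    exact this
  replace h5 : ev1 5 * g 0 + ev1 4 * g 1 + ev1 3 * g 2 + ev1 2 * g 3 + ev1 1 * g 4 + ev1 0 * g 5 + ev1 10 * g 6 + ev1 9 * g 7 + ev1 8 * g 8 + ev1 7 * g 9 + ev1 6 * g 10 = g 5 := by
    have := h5
    simp only [mulVec, dotProduct, Fin.sum_univ_castSucc, Fin.sum_univ_zero, zero_add, circulant_apply] at this
    exact this
  simp only [m0, m1, m2, m3, m4, m5, m6, m7, m8, m9, m10] at h0 h1 h2 h3 h4 h5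
  have p3 : (3 : ZMod 3) = 0 := by decide
  have q5 : g 5 = g 0 + g 1 + 2 * g 2 + g 3 := by
    linear_combination (-2) * h0 + (-2) * h1 + (-1) * h2 + (-2) * h3 + (-1) * h5 + ((1) * g 1 + (1) * g 3 + (2) * g 4 + (2) * g 5 + (2) * g 6 + (1) * g 7 + (1) * g 8 + (1) * g 9 + (1) * g 10) * p3
  have q6 : g 6 = g 1 + g 2 + 2 * g 3 + g 4 := by
    linear_combination (-2) * h0 + (-2) * h3 + (-1) * h4 + ((1) * g 1 + (1) * g 4 + (1) * g 5 + (1) * g 6 + (1) * g 7 + (1) * g 8 + (1) * g 9) * p3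
  have q7 : g 7 = g 0 + g 1 + 2 * g 3 + 2 * g 4 := by
    linear_combination (-2) * h0 + (-1) * h1 + (-1) * h2 + (-2) * h3 + (-2) * h4 + (-2) * h5 + ((1) * g 1 + (1) * g 2 + (1) * g 3 + (1) * g 4 + (2) * g 5 + (2) * g 6 + (2) * g 7 + (2) * g 8 + (2) * g 9 + (1) * g 10) * p3
  have q8 : g 8 = 2 * g 0 + 2 * g 2 + 2 * g 3 + 2 * g 4 := by
    linear_combination (-2) * h0 + (-2) * h1 + (-2) * h2 + (-1) * h3 + (-1) * h5 + ((1) * g 1 + (1) * g 3 + (1) * g 4 + (2) * g 5 + (2) * g 6 + (1) * g 7 + (1) * g 8 + (1) * g 9 + (1) * g 10) * p3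
  have q9 : g 9 = 2 * g 0 + g 1 + g 2 + g 3 + 2 * g 4 := by
    linear_combination (-1) * h1 + (-2) * h2 + (-1) * h3 + (-2) * h5 + ((1) * g 3 + (1) * g 5 + (2) * g 6 + (1) * g 7 + (1) * g 8 + (1) * g 9 + (1) * g 10) * p3
  have q10 : g 10 = 2 * g 0 + g 1 + 2 * g 2 + g 4 := by
    linear_combination (-2) * h0 + (-2) * h2 + (-2) * h3 + (-2) * h4 + (-2) * h5 + ((1) * g 1 + (2) * g 3 + (1) * g 4 + (2) * g 5 + (2) * g 6 + (2) * g 7 + (2) * g 8 + (2) * g 9 + (1) * g 10) * p3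
  funext i
  fin_cases i
  iterate 5 rfl
  exacts [q5, q6, q7, q8, q9, q10]

theorem ys1_mem : ∀ k : Fin 5,
    circulant ev1 *ᵥ (ys1.getD k 0) = ys1.getD k 0 := by
  decide +kernel

theorem ev1_idem : circulant ev1 *ᵥ ev1 = ev1 := by decide +kernel

theorem search1_aux : ∀ a1 a2 a3 a4 : ZMod 3,
    enc1 0 a1 a2 a3 a4 = 0 ∨
    good (enc1 0 a1 a2 a3 a4) (ys1.getD 0 0) = true ∨
    good (enc1 0 a1 a2 a3 a4) (ys1.getD 1 0) = true ∨
    good (enc1 0 a1 a2 a3 a4) (ys1.getD 2 0) = true ∨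
    good (enc1 0 a1 a2 a3 a4) (ys1.getD 3 0) = true ∨
    good (enc1 0 a1 a2 a3 a4) (ys1.getD 4 0) = true := by
  decide +kernel

theorem search1 (g : V11) (h : circulant ev1 *ᵥ g = g) :
    (∃ s : ZMod 3, g = s • ev1) ∨
    ∃ y : V11, circulant ev1 *ᵥ y = y ∧ ∀ i, y i ≠ 0 ∨ (circulant g *ᵥ y) i ≠ 0 := by
  obtain ⟨g', hg'⟩ : ∃ g' : V11, g' = g - g 0 • ev1 := ⟨_, rfl⟩
  have hz : g' 0 = 0 := by
    have m0 : ev1 0 = 1 := rfl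
    rw [hg', Pi.sub_apply, Pi.smul_apply, m0, smul_eq_mul, mul_one, sub_self]
  have h' : circulant ev1 *ᵥ g' = g' := by
    rw [hg', mulVec_sub, mulVec_smul, h, ev1_idem]
  have hgg : g = g' + g 0 • ev1 := by rw [hg', sub_add_cancel]
  have lift_good : ∀ y : V11, circulant ev1 *ᵥ y = y → good g' y = true →
      ∃ y : V11, circulant ev1 *ᵥ y = y ∧ ∀ i, y i ≠ 0 ∨ (circulant g *ᵥ y) i ≠ 0 := by
    intro y hy hgood
    refine ⟨y, hy, fun i => ?_⟩
    rcases of_decide_eq_true hgood i with k | k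
    · exact Or.inl k
    · by_cases hyi : y i = 0
      · right
        rw [hgg, circulant_add, circulant_smul, add_mulVec, smul_mulVec, hy, Pi.add_apply,
          Pi.smul_apply, hyi, smul_zero, add_zero]
        exact k
      · exact Or.inl hyi
  have key := search1_aux (g' 1) (g' 2) (g' 3) (g' 4)
  have hs := enc1_surj g' h'
  rw [hz] at hs
  rw [← hs] at key
  rcases key with k | k | k | k | k | k
  · exact Or.inl ⟨g 0, by rw [k, zero_add] at hgg; exact hgg⟩
  · exact Or.inr (lift_good _ (ys1_mem 0) k)
  · exact Or.inr (lift_good _ (ys1_mem 1) k)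
  · exact Or.inr (lift_good _ (ys1_mem 2) k)
  · exact Or.inr (lift_good _ (ys1_mem 3) k)
  · exact Or.inr (lift_good _ (ys1_mem 4) k)

def ev2 : V11 := idv 1 1 0
def enc2 (a0 a1 a2 a3 a4 : ZMod 3) : V11 :=
  ![a0, a1, a2, a3, a4,
    a0 + 2 * a2 + a3 + 2 * a4,
    2 * a0 + a1 + a2 + a3 + 2 * a4,
    2 * a0 + 2 * a1 + 2 * a2 + 2 * a4,
    2 * a0 + 2 * a1 + a3 + a4,
    a0 + 2 * a1 + a2 + a3,
    a1 + 2 * a2 + a3 + a4]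
def ys2 : List V11 :=
  [![0, 0, 1, 1, 1, 2, 1, 1, 2, 2, 1],
   ![0, 1, 0, 2, 1, 1, 2, 1, 2, 1, 1],
   ![0, 1, 1, 1, 1, 2, 2, 0, 1, 1, 2],
   ![0, 1, 1, 2, 2, 2, 2, 2, 0, 2, 1],
   ![0, 1, 2, 1, 1, 1, 0, 2, 1, 2, 1]]
theorem enc2_surj (g : V11) (h : circulant ev2 *ᵥ g = g) :
    g = enc2 (g 0) (g 1) (g 2) (g 3) (g 4) := by
  have h0 := congrFun h 0
  have h1 := congrFun h 1
  have h2 := congrFun h 2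
  have h3 := congrFun h 3
  have h4 := congrFun h 4
  have h5 := congrFun h 5
  have m0 : ev2 0 = 1 := rfl
  have m1 : ev2 1 = 1 := rfl
  have m2 : ev2 2 = 0 := rfl
  have m3 : ev2 3 = 1 := rfl
  have m4 : ev2 4 = 1 := rfl
  have m5 : ev2 5 = 1 := rfl
  have m6 : ev2 6 = 0 := rfl
  have m7 : ev2 7 = 0 := rfl
  have m8 : ev2 8 = 0 := rfl
  have m9 : ev2 9 = 1 := rfl
  have m10 : ev2 10 = 0 := rfl
  replace h0 : ev2 0 * g 0 + ev2 10 * g 1 + ev2 9 * g 2 + ev2 8 * g 3 + ev2 7 * g 4 + ev2 6 * g 5 + ev2 5 * g 6 + ev2 4 * g 7 + ev2 3 * g 8 + ev2 2 * g 9 + ev2 1 * g 10 = g 0 := by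
    have := h0
    simp only [mulVec, dotProduct, Fin.sum_univ_castSucc, Fin.sum_univ_zero, zero_add, circulant_apply] at this
    exact this
  replace h1 : ev2 1 * g 0 + ev2 0 * g 1 + ev2 10 * g 2 + ev2 9 * g 3 + ev2 8 * g 4 + ev2 7 * g 5 + ev2 6 * g 6 + ev2 5 * g 7 + ev2 4 * g 8 + ev2 3 * g 9 + ev2 2 * g 10 = g 1 := by
    have := h1
    simp only [mulVec, dotProduct, Fin.sum_univ_castSucc, Fin.sum_univ_zero, zero_add, circulant_apply] at this
    exact this
  replace h2 : ev2 2 * g 0 + ev2 1 * g 1 + ev2 0 * g 2 + ev2 10 * g 3 + ev2 9 * g 4 + ev2 8 * g 5 + ev2 7 * g 6 + ev2 6 * g 7 + ev2 5 * g 8 + ev2 4 * g 9 + ev2 3 * g 10 = g 2 := by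
    have := h2
    simp only [mulVec, dotProduct, Fin.sum_univ_castSucc, Fin.sum_univ_zero, zero_add, circulant_apply] at this
    exact this
  replace h3 : ev2 3 * g 0 + ev2 2 * g 1 + ev2 1 * g 2 + ev2 0 * g 3 + ev2 10 * g 4 + ev2 9 * g 5 + ev2 8 * g 6 + ev2 7 * g 7 + ev2 6 * g 8 + ev2 5 * g 9 + ev2 4 * g 10 = g 3 := by
    have := h3
    simp only [mulVec, dotProduct, Fin.sum_univ_castSucc, Fin.sum_univ_zero, zero_add, circulant_apply] at this
    exact this
  replace h4 : ev2 4 * g 0 + ev2 3 * g 1 + ev2 2 * g 2 + ev2 1 * g 3 + ev2 0 * g 4 + ev2 10 * g 5 + ev2 9 * g 6 + ev2 8 * g 7 + ev2 7 * g 8 + ev2 6 * g 9 + ev2 5 * g 10 = g 4 := by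
    have := h4
    simp only [mulVec, dotProduct, Fin.sum_univ_castSucc, Fin.sum_univ_zero, zero_add, circulant_apply] at this
    exact this
  replace h5 : ev2 5 * g 0 + ev2 4 * g 1 + ev2 3 * g 2 + ev2 2 * g 3 + ev2 1 * g 4 + ev2 0 * g 5 + ev2 10 * g 6 + ev2 9 * g 7 + ev2 8 * g 8 + ev2 7 * g 9 + ev2 6 * g 10 = g 5 := by
    have := h5
    simp only [mulVec, dotProduct, Fin.sum_univ_castSucc, Fin.sum_univ_zero, zero_add, circulant_apply] at this
    exact this
  simp only [m0, m1, m2, m3, m4, m5, m6, m7, m8, m9, m10] at h0 h1 h2 h3 h4 h5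
  have p3 : (3 : ZMod 3) = 0 := by decide
  have q5 : g 5 = g 0 + 2 * g 2 + g 3 + 2 * g 4 := by
    linear_combination (-2) * h0 + (-1) * h2 + (-2) * h3 + (-1) * h4 + (-1) * h5 + ((1) * g 0 + (1) * g 1 + (1) * g 2 + (1) * g 5 + (1) * g 6 + (1) * g 7 + (1) * g 8 + (1) * g 9 + (2) * g 10) * p3
  have q6 : g 6 = 2 * g 0 + g 1 + g 2 + g 3 + 2 * g 4 := by
    linear_combination (-2) * h1 + (-1) * h2 + (-2) * h4 + (-1) * h5 + ((1) * g 0 + (1) * g 1 + (1) * g 3 + (1) * g 6 + (1) * g 7 + (1) * g 8 + (1) * g 9 + (1) * g 10) * p3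
  have q7 : g 7 = 2 * g 0 + 2 * g 1 + 2 * g 2 + 2 * g 4 := by
    linear_combination (-2) * h5 + ((1) * g 7) * p3
  have q8 : g 8 = 2 * g 0 + 2 * g 1 + g 3 + g 4 := by
    linear_combination (-2) * h0 + (-1) * h4 + (-1) * h5 + ((1) * g 2 + (1) * g 6 + (1) * g 7 + (1) * g 8 + (1) * g 10) * p3
  have q9 : g 9 = g 0 + 2 * g 1 + g 2 + g 3 := by
    linear_combination (-1) * h0 + (-2) * h1 + (-2) * h4 + ((1) * g 0 + (1) * g 3 + (1) * g 6 + (1) * g 7 + (1) * g 8 + (1) * g 9 + (1) * g 10) * p3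
  have q10 : g 10 = g 1 + 2 * g 2 + g 3 + g 4 := by
    linear_combination (-1) * h1 + (-2) * h2 + (-2) * h5 + ((1) * g 0 + (1) * g 1 + (1) * g 4 + (1) * g 7 + (1) * g 8 + (1) * g 9 + (1) * g 10) * p3
  funext i
  fin_cases i
  iterate 5 rfl
  exacts [q5, q6, q7, q8, q9, q10]

theorem ys2_mem : ∀ k : Fin 5,
    circulant ev2 *ᵥ (ys2.getD k 0) = ys2.getD k 0 := by
  decide +kernel

theorem ev2_idem : circulant ev2 *ᵥ ev2 = ev2 := by decide +kernel

theorem search2_aux : ∀ a1 a2 a3 a4 : ZMod 3,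
    enc2 0 a1 a2 a3 a4 = 0 ∨
    good (enc2 0 a1 a2 a3 a4) (ys2.getD 0 0) = true ∨
    good (enc2 0 a1 a2 a3 a4) (ys2.getD 1 0) = true ∨
    good (enc2 0 a1 a2 a3 a4) (ys2.getD 2 0) = true ∨
    good (enc2 0 a1 a2 a3 a4) (ys2.getD 3 0) = true ∨
    good (enc2 0 a1 a2 a3 a4) (ys2.getD 4 0) = true := by
  decide +kernel

theorem search2 (g : V11) (h : circulant ev2 *ᵥ g = g) :
    (∃ s : ZMod 3, g = s • ev2) ∨
    ∃ y : V11, circulant ev2 *ᵥ y = y ∧ ∀ i, y i ≠ 0 ∨ (circulant g *ᵥ y) i ≠ 0 := by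
  obtain ⟨g', hg'⟩ : ∃ g' : V11, g' = g - g 0 • ev2 := ⟨_, rfl⟩
  have hz : g' 0 = 0 := by
    have m0 : ev2 0 = 1 := rfl
    rw [hg', Pi.sub_apply, Pi.smul_apply, m0, smul_eq_mul, mul_one, sub_self]
  have h' : circulant ev2 *ᵥ g' = g' := by
    rw [hg', mulVec_sub, mulVec_smul, h, ev2_idem]
  have hgg : g = g' + g 0 • ev2 := by rw [hg', sub_add_cancel]
  have lift_good : ∀ y : V11, circulant ev2 *ᵥ y = y → good g' y = true →
      ∃ y : V11, circulant ev2 *ᵥ y = y ∧ ∀ i, y i ≠ 0 ∨ (circulant g *ᵥ y) i ≠ 0 := by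
    intro y hy hgood
    refine ⟨y, hy, fun i => ?_⟩
    rcases of_decide_eq_true hgood i with k | k
    · exact Or.inl k
    · by_cases hyi : y i = 0
      · right
        rw [hgg, circulant_add, circulant_smul, add_mulVec, smul_mulVec, hy, Pi.add_apply,
          Pi.smul_apply, hyi, smul_zero, add_zero]
        exact k
      · exact Or.inl hyi
  have key := search2_aux (g' 1) (g' 2) (g' 3) (g' 4)
  have hs := enc2_surj g' h'
  rw [hz] at hs
  rw [← hs] at key
  rcases key with k | k | k | k | k | k
  · exact Or.inl ⟨g 0, by rw [k, zero_add] at hgg; exact hgg⟩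
  · exact Or.inr (lift_good _ (ys2_mem 0) k)
  · exact Or.inr (lift_good _ (ys2_mem 1) k)
  · exact Or.inr (lift_good _ (ys2_mem 2) k)
  · exact Or.inr (lift_good _ (ys2_mem 3) k)
  · exact Or.inr (lift_good _ (ys2_mem 4) k)


theorem enc1_zero : ∀ a0 a1 a2 a3 a4 : ZMod 3, ∃ i, enc1 a0 a1 a2 a3 a4 i = 0 := by
  decide +kernel

theorem idem_cases : ∀ a b c : ZMod 3, circulant (idv a b c) *ᵥ idv a b c = idv a b c →
    (∃ t ∈ [(fun _ => 1 : V11), ![1, 2, 2, 2, 2, 2, 2, 2, 2, 2, 2]],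
      (∀ i, t i ≠ 0) ∧ circulant (idv a b c) *ᵥ t = t) ∨
    idv a b c = 0 ∨ idv a b c = ev1 ∨ idv a b c = ev2 := by
  decide +kernel

theorem ev12 : circulant ev1 *ᵥ ev2 = 0 := by decide +kernel

/-- The basic circulant shift matrix. -/
def smat : Matrix (Fin 11) (Fin 11) (ZMod 3) := circulant (Pi.single 1 1)

theorem smat_pow (k : ℕ) : smat ^ k = circulant (Pi.single (Fin.ofNat 11 k) 1) := by
  induction k with
  | zero => rw [pow_zero]; exact (circulant_single_one (ZMod 3) (Fin 11)).symm
  | succ k ih =>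
    rw [pow_succ, ih, smat, circulant_mul]
    congr 1
    funext i
    have : (Fin.ofNat 11 (k + 1)) = Fin.ofNat 11 k + 1 := by
      apply Fin.ext; simp [Fin.add_def]
    rw [this]
    simp [mulVec, dotProduct, circulant_apply, Pi.single_apply, sub_eq_iff_eq_add]

/-- The polynomial attached to a vector. -/
def vpoly (c : V11) : Polynomial (ZMod 3) :=
  ∑ j : Fin 11, Polynomial.C (c j) * Polynomial.X ^ (j : ℕ)

theorem aeval_vpoly (c : V11) (k : ℕ) (m : Fin 11) (hm : Fin.ofNat 11 k * m = 1) :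
    Polynomial.aeval (smat ^ k) (vpoly c) = circulant (fun i => c (m * i)) := by
  simp only [vpoly, map_sum, map_mul, Polynomial.aeval_C, map_pow, Polynomial.aeval_X,
    Algebra.algebraMap_eq_smul_one, smul_mul_assoc, one_mul, ← pow_mul]
  simp only [smat_pow]
  ext i j
  rw [Matrix.sum_apply]
  simp only [Matrix.smul_apply, circulant_apply, smul_eq_mul, Pi.single_apply]
  rw [Finset.sum_eq_single (m * (i - j))]
  · rw [if_pos, mul_one]
    have : Fin.ofNat 11 (k * ((m * (i - j) : Fin 11) : ℕ)) = Fin.ofNat 11 k * (m * (i - j)) := by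
      apply Fin.ext; simp [Fin.mul_def]
    rw [this, ← mul_assoc, hm, one_mul]
  · intro b _ hb
    rw [if_neg, mul_zero]
    intro h
    apply hb
    have : Fin.ofNat 11 (k * (b : ℕ)) = Fin.ofNat 11 k * b := by
      apply Fin.ext; simp [Fin.mul_def]
    rw [h, this, ← mul_assoc, mul_comm m, hm, one_mul]
  · simp

theorem circ_cube (c : V11) : circulant c ^ 3 = circulant (fun i => c (4 * i)) := by
  have h1 := aeval_vpoly c 1 1 (by decide)
  have h3 := aeval_vpoly c 3 4 (by decide)
  simp only [pow_one, one_mul] at h1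
  rw [← h3, ← h1, ← map_pow, ← ZMod.expand_card, Polynomial.expand_aeval]

theorem circ_pow243 (c : V11) : circulant c ^ 243 = circulant c := by
  have : circulant c ^ 243 = ((((circulant c ^ 3) ^ 3) ^ 3) ^ 3) ^ 3 := by
    simp only [← pow_mul]
  rw [this]
  simp only [circ_cube]
  congr 1
  funext i
  congr 1
  revert i
  decide

theorem circ_pow (c : V11) (k : ℕ) : ∃ e : V11, circulant c ^ k = circulant e := by
  induction k with
  | zero => exact ⟨_, by rw [pow_zero]; exact (circulant_single_one (ZMod 3) (Fin 11)).symm⟩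
  | succ k ih =>
    obtain ⟨e, he⟩ := ih
    exact ⟨_, by rw [pow_succ, he, circulant_mul]⟩

theorem idem_form (e : V11) (h : circulant e * circulant e = circulant e) :
    e = idv (e 0) (e 1) (e 2) := by
  have h3 : (fun i => e (4 * i)) = e := by
    apply circulant_injective
    rw [← circ_cube, pow_succ, pow_two, h, h]
  have q1 : e 4 = e 1 := congrFun h3 1
  have q2 : e 5 = e 4 := congrFun h3 4
  have q3 : e 9 = e 5 := congrFun h3 5
  have q4 : e 3 = e 9 := congrFun h3 9
  have r1 : e 8 = e 2 := congrFun h3 2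
  have r2 : e 10 = e 8 := congrFun h3 8
  have r3 : e 7 = e 10 := congrFun h3 10
  have r4 : e 6 = e 7 := congrFun h3 7
  funext i
  fin_cases i <;> simp [idv, *]

/-- The idempotent attached to `c`. -/
theorem exists_inv (c : V11) : ∃ b e : V11, circulant c * circulant b = circulant e ∧
    circulant e * circulant c = circulant c ∧
    ((∃ t : V11, (∀ i, t i ≠ 0) ∧ circulant e *ᵥ t = t) ∨ e = 0 ∨ e = ev1 ∨ e = ev2) := by
  obtain ⟨b, hb⟩ := circ_pow c 241
  have hc := circ_pow243 c
  refine ⟨b, circulant c *ᵥ b, circulant_mul _ _, ?_, ?_⟩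
  · rw [← circulant_mul, ← hb, ← pow_succ', ← pow_succ, hc]
  · have hid : circulant (circulant c *ᵥ b) * circulant (circulant c *ᵥ b)
        = circulant (circulant c *ᵥ b) := by
      rw [← circulant_mul, ← hb, ← pow_succ', ← pow_add]
      have : 241 + 1 + (241 + 1) = 243 + 241 := rfl
      rw [this, pow_add, hc, ← pow_succ']
    generalize circulant c *ᵥ b = e at hid
    have hf := idem_form e hid
    rw [circulant_mul] at hid
    have hid2 := circulant_injective hid
    rw [hf] at hid2 ⊢
    rcases idem_cases _ _ _ hid2 with ⟨t, _, h1, h2⟩ | h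
    · exact Or.inl ⟨t, h1, h2⟩
    · exact Or.inr h

theorem trich (c : V11) : (∃ x : V11, ∀ i, (circulant c *ᵥ x) i ≠ 0) ∨ c = 0 ∨
    (∃ b, circulant c * circulant b = circulant ev1 ∧ circulant ev1 * circulant c = circulant c) ∨
    (∃ b, circulant c * circulant b = circulant ev2 ∧ circulant ev2 * circulant c = circulant c)
    := by
  obtain ⟨b, e, h1, h2, h | h | h | h⟩ := exists_inv c
  · obtain ⟨t, ht, h⟩ := h
    refine Or.inl ⟨circulant b *ᵥ t, ?_⟩
    rw [mulVec_mulVec, h1, h]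
    exact ht
  · subst h
    refine Or.inr (Or.inl ?_)
    apply circulant_injective
    rw [← h2]; simp
  · subst h; exact Or.inr (Or.inr (Or.inl ⟨b, h1, h2⟩))
  · subst h; exact Or.inr (Or.inr (Or.inr ⟨b, h1, h2⟩))

theorem same_comp (e c d b : V11)
    (hs : ∀ g : V11, circulant e *ᵥ g = g → (∃ s : ZMod 3, g = s • e) ∨
      ∃ y : V11, circulant e *ᵥ y = y ∧ ∀ i, y i ≠ 0 ∨ (circulant g *ᵥ y) i ≠ 0)
    (h1 : circulant c * circulant b = circulant e)
    (h2 : circulant e * circulant c = circulant c)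
    (h3 : circulant e * circulant d = circulant d)
    (hn : ∀ s : ZMod 3, d ≠ s • c) :
    ∃ x : V11, ∀ i, (circulant c *ᵥ x) i ≠ 0 ∨ (circulant d *ᵥ x) i ≠ 0 := by
  have hg : circulant e *ᵥ (circulant d *ᵥ b) = circulant d *ᵥ b := by
    rw [mulVec_mulVec, h3]
  rcases hs _ hg with ⟨s, hs⟩ | ⟨y, hy, hy2⟩
  · exfalso
    apply hn s
    apply circulant_injective
    calc circulant d = circulant e * circulant d := h3.symm
      _ = circulant d * circulant e := circulant_mul_comm _ _
      _ = circulant d * (circulant b * circulant c) := by rw [← h1, circulant_mul_comm c b]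
      _ = circulant (circulant d *ᵥ b) * circulant c := by rw [← mul_assoc, circulant_mul d b]
      _ = s • (circulant e * circulant c) := by rw [hs, circulant_smul, smul_mul_assoc]
      _ = circulant (s • c) := by rw [h2, circulant_smul]
  · refine ⟨circulant b *ᵥ y, ?_⟩
    rw [mulVec_mulVec, mulVec_mulVec, h1, hy, circulant_mul]
    exact hy2

theorem comp_inter (c : V11) (h1 : circulant ev1 * circulant c = circulant c)
    (h2 : circulant ev2 * circulant c = circulant c) : c = 0 := by
  apply circulant_injective
  rw [← h1, ← h2, ← mul_assoc, circulant_mul ev1, ev12]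
  simp

theorem mixed (c d : V11) (hc : c ≠ 0) (hd : d ≠ 0)
    (h1 : circulant ev1 * circulant c = circulant c)
    (h2 : circulant ev2 * circulant d = circulant d) :
    ∃ x : V11, ∀ i, (circulant (c + d) *ᵥ x) i ≠ 0 := by
  rcases trich (c + d) with h | h | ⟨_, _, h⟩ | ⟨_, _, h⟩
  · exact h
  · exfalso
    apply hd
    have hdc : d = -c := (neg_eq_of_add_eq_zero_right h).symm
    apply comp_inter d _ h2
    rw [hdc, circulant_neg, mul_neg, h1]
  · exfalso
    rw [circulant_add, mul_add, h1, add_right_inj] at h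
    exact hd (comp_inter d h h2)
  · exfalso
    rw [circulant_add, mul_add, h2, add_left_inj] at h
    exact hc (comp_inter c h1 h)

theorem core (c d : V11) (hc : c ≠ 0) (hn : ∀ s : ZMod 3, d ≠ s • c) :
    ∃ x : V11, ∀ i, (circulant c *ᵥ x) i ≠ 0 ∨ (circulant d *ᵥ x) i ≠ 0 := by
  have hd : d ≠ 0 := by simpa using hn 0
  have fin : ∀ u v : V11, (∃ x : V11, ∀ i, (circulant (u + v) *ᵥ x) i ≠ 0) →
      ∃ x : V11, ∀ i, (circulant u *ᵥ x) i ≠ 0 ∨ (circulant v *ᵥ x) i ≠ 0 := by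
    rintro u v ⟨x, hx⟩
    refine ⟨x, fun i => ?_⟩
    by_contra hcon
    push Not at hcon
    apply hx i
    rw [circulant_add, add_mulVec, Pi.add_apply, hcon.1, hcon.2, add_zero]
  rcases trich c with ⟨x, hx⟩ | h | ⟨b, h1, h2⟩ | ⟨b, h1, h2⟩
  · exact ⟨x, fun i => Or.inl (hx i)⟩
  · exact absurd h hc
  · rcases trich d with ⟨x, hx⟩ | h | ⟨b', h1', h2'⟩ | ⟨b', h1', h2'⟩
    · exact ⟨x, fun i => Or.inr (hx i)⟩
    · exact absurd h hd
    · exact same_comp ev1 c d b search1 h1 h2 h2' hn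
    · exact fin c d (mixed c d hc hd h2 h2')
  · rcases trich d with ⟨x, hx⟩ | h | ⟨b', h1', h2'⟩ | ⟨b', h1', h2'⟩
    · exact ⟨x, fun i => Or.inr (hx i)⟩
    · exact absurd h hd
    · obtain ⟨x, hx⟩ := fin d c (mixed d c hd hc h2' h2)
      exact ⟨x, fun i => (hx i).symm⟩
    · exact same_comp ev2 c d b search2 h1 h2 h2' hn

theorem cshift_pow_apply (i : ℕ) (u : V11) (j : Fin 11) :
    (cshift (ZMod 3) 11 ^ i) u j = u (j - Fin.ofNat 11 i) := by
  induction i generalizing j with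
  | zero => simp
  | succ i ih =>
    have h1 : (finRotate 11).symm j = j - 1 := by
      rw [Equiv.symm_apply_eq, finRotate_apply, sub_add_cancel]
    have h2 : (Fin.ofNat 11 (i + 1)) = Fin.ofNat 11 i + 1 := by
      apply Fin.ext; simp [Fin.add_def]
    rw [pow_succ', Module.End.mul_apply]
    change ((cshift (ZMod 3) 11 ^ i) u) ((finRotate 11).symm j) = _
    rw [ih, h1, h2, sub_sub, add_comm]

theorem covering_iff_s13 (U : Submodule (ZMod 3) V11) :
    IsCyclicallyCovering U ↔ ∀ x : V11, ∃ k : Fin 11, (fun j => x (j + k)) ∈ U := by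
  rw [IsCyclicallyCovering, Set.eq_univ_iff_forall]
  refine forall_congr' fun x => ?_
  simp only [Set.mem_iUnion, Set.mem_image, SetLike.mem_coe, Finset.mem_range, exists_prop]
  constructor
  · rintro ⟨i, _, u, hu, rfl⟩
    refine ⟨Fin.ofNat 11 i, ?_⟩
    simp only [cshift_pow_apply, add_sub_cancel_right]
    exact hu
  · rintro ⟨k, hk⟩
    refine ⟨k, k.2, _, hk, ?_⟩
    funext j
    rw [cshift_pow_apply]
    simp

/-- The circulant generator of a functional. -/
def cf (f : Module.Dual (ZMod 3) V11) : V11 := fun m => f (Pi.single (-m) 1)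

theorem cf_apply (f : Module.Dual (ZMod 3) V11) (x : V11) (k : Fin 11) :
    (circulant (cf f) *ᵥ x) k = f (fun j => x (j + k)) := by
  rw [LinearMap.pi_apply_eq_sum_univ f]
  simp only [mulVec, dotProduct, circulant_apply, cf]
  refine Fintype.sum_equiv (Equiv.subRight k) _ _ fun l => ?_
  simp only [Equiv.subRight_apply, sub_add_cancel, neg_sub, smul_eq_mul]
  rw [mul_comm]
  congr 2
  funext j
  simp [Pi.single_apply, eq_comm]

theorem cf_inj (f g : Module.Dual (ZMod 3) V11) (h : cf f = cf g) : f = g := by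
  ext x
  have h1 := cf_apply f (Pi.single x 1) 0
  have h2 := cf_apply g (Pi.single x 1) 0
  rw [h] at h1
  simp only [add_zero] at h1 h2
  simpa using h1.symm.trans h2

theorem codim_le (U : Submodule (ZMod 3) V11) (hU : IsCyclicallyCovering U) :
    11 - Module.finrank (ZMod 3) U ≤ 1 := by
  by_contra hcon
  have hr := Subspace.finrank_add_finrank_dualAnnihilator_eq U
  rw [Module.finrank_fin_fun] at hr
  have hA : 2 ≤ Module.finrank (ZMod 3) U.dualAnnihilator := by omega
  obtain ⟨f, hf, hf0⟩ : ∃ f ∈ U.dualAnnihilator, f ≠ 0 := by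
    apply Submodule.exists_mem_ne_zero_of_ne_bot
    intro h
    rw [h, finrank_bot] at hA
    omega
  obtain ⟨g, hg, hgf⟩ : ∃ g ∈ U.dualAnnihilator, g ∉ Submodule.span (ZMod 3) {f} := by
    by_contra hno
    push Not at hno
    have hle : U.dualAnnihilator ≤ Submodule.span (ZMod 3) {f} := hno
    have := Submodule.finrank_mono hle
    rw [finrank_span_singleton hf0] at this
    omega
  obtain ⟨x, hx⟩ := core (cf f) (cf g) (fun h => hf0 (cf_inj f 0 h)) (fun s h => hgf (by
    rw [Submodule.mem_span_singleton]
    exact ⟨s, (cf_inj g (s • f) h).symm⟩))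
  obtain ⟨k, hk⟩ := (covering_iff_s13 U).1 hU x
  rw [Submodule.mem_dualAnnihilator] at hf hg
  rcases hx k with h | h
  · exact h (by rw [cf_apply]; exact hf _ hk)
  · exact h (by rw [cf_apply]; exact hg _ hk)

theorem exists_codim_one : ∃ U : Submodule (ZMod 3) V11, IsCyclicallyCovering U ∧
    11 - Module.finrank (ZMod 3) U = 1 := by
  let f : Module.Dual (ZMod 3) V11 :=
    (LinearMap.proj 0 : V11 →ₗ[ZMod 3] ZMod 3) ∘ₗ (circulant ev1).mulVecLin
  have hcf : cf f = ev1 := by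
    funext m
    simp [cf, f]
  refine ⟨LinearMap.ker f, ?_, ?_⟩
  · rw [covering_iff_s13]
    intro x
    have hm : circulant ev1 *ᵥ (circulant ev1 *ᵥ x) = circulant ev1 *ᵥ x := by
      rw [mulVec_mulVec, circulant_mul, ev1_idem]
    obtain ⟨k, hk⟩ := enc1_zero ((circulant ev1 *ᵥ x) 0) ((circulant ev1 *ᵥ x) 1)
      ((circulant ev1 *ᵥ x) 2) ((circulant ev1 *ᵥ x) 3) ((circulant ev1 *ᵥ x) 4)
    rw [← enc1_surj _ hm] at hk
    refine ⟨k, ?_⟩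
    rw [LinearMap.mem_ker, ← cf_apply, hcf]
    exact hk
  · have hne : f ≠ 0 := by
      intro h
      have : ev1 0 = 0 := by rw [← hcf, h]; rfl
      exact absurd this (by decide)
    have hr := Module.Dual.finrank_ker_add_one_of_ne_zero hne
    rw [Module.finrank_fin_fun] at hr
    omega

/-- `h_3(11) = 1`: there exists a cyclically covering subspace of `𝔽_3^{11}` of
codimension 1, but none of codimension 2. -/
theorem stmt13 :
    hcc (ZMod 3) 11 = 1 ∧
    (∃ U : Submodule (ZMod 3) (Fin 11 → ZMod 3), IsCyclicallyCovering U ∧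
      11 - Module.finrank (ZMod 3) U = 1) ∧
    (∀ U : Submodule (ZMod 3) (Fin 11 → ZMod 3), IsCyclicallyCovering U →
      11 - Module.finrank (ZMod 3) U ≠ 2) := by
  refine ⟨?_, exists_codim_one, fun U hU h => ?_⟩
  · apply le_antisymm
    · apply csSup_le'
      rintro k ⟨U, hU, rfl⟩
      exact codim_le U hU
    · refine le_csSup ⟨1, ?_⟩ exists_codim_one
      rintro k ⟨U, hU, rfl⟩
      exact codim_le U hU
  · exact absurd (h.symm.le.trans (codim_le U hU)) (by decide)
end
end

section
/- h_3(16) = 1; that is, the largest possible codimension of a cyclically covering subspace of 𝔽_3^{16} equals 1: there exists a cyclically covering subspace of 𝔽_3^{16} of codimension 1, but none of codimension 2. -/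
noncomputable section

/-! ### Coordinate models of the components -/

/-- Shift on `F[X]/(X^4 - ε X^2 - 1)`. -/
def M4 (ε : ZMod 3) (c : Fin 4 → ZMod 3) : Fin 4 → ZMod 3 := ![c 3, c 0, c 1 + ε * c 3, c 2]

/-- Shift on `F[X]/(X^2 - ε X - 1)`. -/
def M2 (ε : ZMod 3) (c : Fin 2 → ZMod 3) : Fin 2 → ZMod 3 := ![c 1, c 0 + ε * c 1]

/-- Orbit representatives for `M4`. -/
def reps (ε : ZMod 3) : Fin 5 → Fin 4 → ZMod 3 :=
  ![![0,0,0,1], ![0,0,1,1], ![0,0,1,2], ![0,1,1,1], ![0,1,ε,2*ε]]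

lemma dec2 : ∀ ε : ZMod 3, ε ≠ 0 → ∀ φ : Fin 2 → ZMod 3, φ ≠ 0 → ∃ c : Fin 2 → ZMod 3,
    ∀ i < 18, φ ⬝ᵥ ((M2 ε)^[i] c) = 0 → i % 4 < 2 := by decide +kernel

lemma M4_eight : ∀ ε : ZMod 3, ε ≠ 0 → ∀ c, (M4 ε)^[8] c = -c := by decide +kernel

lemma M4_add_eight (ε : ZMod 3) (hε : ε ≠ 0) (k : ℕ) (c : Fin 4 → ZMod 3) :
    (M4 ε)^[8 + k] c = - (M4 ε)^[k] c := by
  rw [Function.iterate_add_apply, M4_eight ε hε]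

lemma dec4_core : ∀ ε : ZMod 3, ε ≠ 0 → ∀ φ : Fin 4 → ZMod 3, φ ≠ 0 → ∃ c : Fin 4 → ZMod 3,
    φ ⬝ᵥ c ≠ 0 ∧ φ ⬝ᵥ (M4 ε c) ≠ 0 ∧ φ ⬝ᵥ ((M4 ε)^[4] c) ≠ 0 ∧ φ ⬝ᵥ ((M4 ε)^[5] c) ≠ 0 := by
  decide +kernel

lemma dec4 (ε : ZMod 3) (hε : ε ≠ 0) (φ : Fin 4 → ZMod 3) (hφ : φ ≠ 0) :
    ∃ c : Fin 4 → ZMod 3, ∀ i < 18, φ ⬝ᵥ ((M4 ε)^[i] c) = 0 → i % 4 < 2 := by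
  obtain ⟨c, h0, h1, h4, h5⟩ := dec4_core ε hε φ hφ
  have hs : ∀ k, φ ⬝ᵥ ((M4 ε)^[8 + k] c) = 0 → φ ⬝ᵥ ((M4 ε)^[k] c) = 0 := by
    intro k h
    rwa [M4_add_eight ε hε, dotProduct_neg, neg_eq_zero] at h
  refine ⟨(M4 ε)^[6] c, fun i _ h => ?_⟩
  rw [← Function.iterate_add_apply] at h
  have hm : ∀ q r, φ ⬝ᵥ ((M4 ε)^[8 * q + r] c) = 0 → φ ⬝ᵥ ((M4 ε)^[r] c) = 0 := by
    intro q r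
    induction q with
    | zero => simp
    | succ q ih =>
      intro h
      refine ih (hs _ ?_)
      rwa [show 8 + (8 * q + r) = 8 * (q + 1) + r by ring]
  rw [← Nat.div_add_mod (i + 6) 8] at h
  have h' := hm _ _ h
  by_contra hi
  have : (i + 6) % 8 = 0 ∨ (i + 6) % 8 = 1 ∨ (i + 6) % 8 = 4 ∨ (i + 6) % 8 = 5 := by omega
  rcases this with e | e | e | e <;> rw [e] at h'
  · exact h0 h'
  · exact h1 h'
  · exact h4 h'
  · exact h5 h'

lemma ne2 : ∀ ε : ZMod 3, ε ≠ 0 → ∀ i < 16, (M2 ε)^[i] ![1, 0] ≠ 0 := by decide +kernel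

lemma reps_inj_core : ∀ ε : ZMod 3, ε ≠ 0 → ∀ c d : Fin 5, ∀ i < 8,
    ((M4 ε)^[i] (reps ε c) = reps ε d ∨ (M4 ε)^[i] (reps ε c) = - reps ε d) → c = d := by
  decide +kernel

lemma reps_inj (ε : ZMod 3) (hε : ε ≠ 0) (c d : Fin 5) (i : ℕ) (hi : i < 16) (j : ℕ)
    (hj : j < 16) (h : (M4 ε)^[i] (reps ε c) = (M4 ε)^[j] (reps ε d)) : c = d := by
  have h1 := congrArg ((M4 ε)^[16 - j]) h
  rw [← Function.iterate_add_apply, ← Function.iterate_add_apply, Nat.sub_add_cancel hj.le,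
    show 16 = 8 + (8 + 0) by norm_num, M4_add_eight ε hε, M4_add_eight ε hε, neg_neg,
    Function.iterate_zero, id] at h1
  have hm : ∀ q r, ((M4 ε)^[8 * q + r] (reps ε c) = reps ε d ∨
      (M4 ε)^[8 * q + r] (reps ε c) = - reps ε d) →
      ((M4 ε)^[r] (reps ε c) = reps ε d ∨ (M4 ε)^[r] (reps ε c) = - reps ε d) := by
    intro q r
    induction q with
    | zero => simp
    | succ q ih =>
      intro h
      apply ih
      rw [show 8 * (q + 1) + r = 8 + (8 * q + r) by ring, M4_add_eight ε hε, neg_inj,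
        neg_eq_iff_eq_neg] at h
      exact h.symm
  rw [← Nat.div_add_mod (8 + (8 + 0) - j + i) 8] at h1
  exact reps_inj_core ε hε c d _ (Nat.mod_lt _ (by norm_num)) (hm _ _ (Or.inl h1))

lemma reps_inj' (ε : ZMod 3) (hε : ε ≠ 0) (c d : Fin 5) (i : ℕ) (hi : i < 16) (j : ℕ)
    (hj : j < 16) (h : (M4 ε)^[i] (reps ε c) = - (M4 ε)^[j] (reps ε d)) : c = d := by
  rw [← M4_eight ε hε, ← Function.iterate_add_apply] at h
  by_cases h8 : 8 + j < 16
  · exact reps_inj ε hε c d i hi _ h8 h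
  · obtain ⟨k, rfl⟩ : ∃ k, j = 8 + k := ⟨j - 8, by omega⟩
    rw [Function.iterate_add_apply, Function.iterate_add_apply, M4_eight ε hε, M4_eight ε hε,
      neg_neg] at h
    exact reps_inj ε hε c d i hi k (by omega) h

lemma reps_ne : ∀ ε : ZMod 3, ε ≠ 0 → ∀ c : Fin 5, ∀ i < 16,
    (M4 ε)^[i] (reps ε c) ≠ - (M4 ε)^[i] (reps ε c) := by decide +kernel

/-! ### The component lemma -/

variable {Q : Type} [AddCommGroup Q] [Module (ZMod 3) Q] [Module.Finite (ZMod 3) Q]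

lemma comp_aux {d : ℕ} (M : (Fin d → ZMod 3) → (Fin d → ZMod 3))
    (hdec : ∀ φ : Fin d → ZMod 3, φ ≠ 0 → ∃ c : Fin d → ZMod 3,
      ∀ i < 18, φ ⬝ᵥ (M^[i] c) = 0 → i % 4 < 2)
    (p : (Fin d → ZMod 3) →ₗ[ZMod 3] Q)
    (hr : Module.finrank (ZMod 3) (LinearMap.range p) ≤ 1) :
    (∀ c, p c = 0) ∨ ∃ q : Q, q ≠ 0 ∧ (∀ c, p c ∈ Submodule.span (ZMod 3) {q}) ∧
      ∃ c, ∀ i < 18, p (M^[i] c) = 0 → i % 4 < 2 := by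
  by_cases h0 : ∀ c, p c = 0
  · exact Or.inl h0
  right
  push Not at h0
  obtain ⟨c0, hc0⟩ := h0
  rw [finrank_le_one_iff] at hr
  obtain ⟨⟨q, hq⟩, hv⟩ := hr
  have hv' : ∀ c, ∃ a : ZMod 3, p c = a • q := by
    intro c
    obtain ⟨a, ha⟩ := hv ⟨p c, LinearMap.mem_range_self p c⟩
    exact ⟨a, by simpa using (congrArg Subtype.val ha).symm⟩
  have hq0 : q ≠ 0 := by
    rintro rfl
    obtain ⟨a, ha⟩ := hv' c0
    exact hc0 (by simpa using ha)
  choose f hf using fun j : Fin d => hv' (Pi.single j 1)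
  have hp : ∀ c, p c = (f ⬝ᵥ c) • q := by
    intro c
    conv_lhs => rw [pi_eq_sum_univ' c]
    rw [map_sum, dotProduct, Finset.sum_smul]
    refine Finset.sum_congr rfl fun j _ => ?_
    rw [map_smul]
    have : (fun k => if k = j then (1 : ZMod 3) else 0) = Pi.single j 1 := by
      ext k; simp [Pi.single_apply]
    first
      | rw [this, hf, smul_smul, mul_comm]
      | rw [hf, smul_smul, mul_comm]
  refine ⟨q, hq0, fun c => ?_, ?_⟩
  · rw [hp]; exact Submodule.smul_mem _ _ (Submodule.mem_span_singleton_self q)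
  · have hf0 : f ≠ 0 := by
      rintro rfl
      exact hc0 (by rw [hp]; simp)
    obtain ⟨c, hc⟩ := hdec f hf0
    refine ⟨c, fun i hi h => hc i hi ?_⟩
    rw [hp] at h
    exact (smul_eq_zero.mp h).resolve_right hq0

lemma comp2 (ε : ZMod 3) (hε : ε ≠ 0) (p : (Fin 2 → ZMod 3) →ₗ[ZMod 3] Q)
    (H : ∀ c, ∃ i < 16, p ((M2 ε)^[i] c) = 0) :
    (∀ c, p c = 0) ∨ ∃ q : Q, q ≠ 0 ∧ (∀ c, p c ∈ Submodule.span (ZMod 3) {q}) ∧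
      ∃ c, ∀ i < 18, p ((M2 ε)^[i] c) = 0 → i % 4 < 2 := by
  apply comp_aux _ (dec2 ε hε)
  obtain ⟨i, hi, h⟩ := H ![1, 0]
  have h1 : 0 < Module.finrank (ZMod 3) (LinearMap.ker p) := by
    have : Nontrivial (LinearMap.ker p) :=
      ⟨⟨⟨_, h⟩, 0, fun h' => ne2 ε hε i hi (congrArg Subtype.val h')⟩⟩
    exact Module.finrank_pos
  have h2 := LinearMap.finrank_range_add_finrank_ker p
  simp at h2
  omega

lemma comp4 (ε : ZMod 3) (hε : ε ≠ 0) (p : (Fin 4 → ZMod 3) →ₗ[ZMod 3] Q)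
    (H : ∀ c, ∃ i < 16, p ((M4 ε)^[i] c) = 0) :
    (∀ c, p c = 0) ∨ ∃ q : Q, q ≠ 0 ∧ (∀ c, p c ∈ Submodule.span (ZMod 3) {q}) ∧
      ∃ c, ∀ i < 18, p ((M4 ε)^[i] c) = 0 → i % 4 < 2 := by
  apply comp_aux _ (dec4 ε hε)
  choose i hi h using fun k => H (reps ε k)
  by_contra hlt
  have h2 := LinearMap.finrank_range_add_finrank_ker p
  simp only [Module.finrank_fintype_fun_eq_card, Fintype.card_fin] at h2
  have h3 : Module.finrank (ZMod 3) (LinearMap.ker p) ≤ 2 := by omega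
  have hcard := Module.natCard_eq_pow_finrank (K := ZMod 3) (V := LinearMap.ker p)
  rw [Nat.card_zmod] at hcard
  have hle : Nat.card (LinearMap.ker p) ≤ 9 := by
    rw [hcard]
    exact (Nat.pow_le_pow_right (by norm_num) h3).trans (by norm_num)
  let n : Fin 5 → LinearMap.ker p := fun k => ⟨_, h k⟩
  let g : Fin 5 × Bool → LinearMap.ker p := fun x => if x.2 then n x.1 else - n x.1
  have hn : ∀ k, n k ≠ - n k := fun k e => reps_ne ε hε k _ (hi k) (congrArg Subtype.val e)
  have hg : Function.Injective g := by
    rintro ⟨k, a⟩ ⟨l, b⟩ e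
    have hkl : k = l := by
      cases a <;> cases b <;> simp only [g, Bool.false_eq_true, if_true, if_false] at e
      · exact reps_inj ε hε k l _ (hi k) _ (hi l) (congrArg Subtype.val (neg_injective e))
      · exact (reps_inj' ε hε l k _ (hi l) _ (hi k) (congrArg Subtype.val e.symm)).symm
      · exact reps_inj' ε hε k l _ (hi k) _ (hi l) (congrArg Subtype.val e)
      · exact reps_inj ε hε k l _ (hi k) _ (hi l) (congrArg Subtype.val e)
    subst hkl
    cases a <;> cases b <;> simp only [g, Bool.false_eq_true, if_true, if_false] at e
    · rfl
    · exact absurd e.symm (hn k)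
    · exact absurd e (hn k)
    · rfl
  have := Nat.card_le_card_of_injective g hg
  simp at this
  simp at hle
  omega

/-! ### The shift on `F^16` -/

abbrev V16 : Type := Fin 16 → ZMod 3
abbrev T16 : V16 →ₗ[ZMod 3] V16 := cshift (ZMod 3) 16

lemma finRotate_symm_eq : ∀ i : Fin 16, (finRotate 16).symm i = i - 1 := by
  intro i
  rw [Equiv.symm_apply_eq]
  simp

lemma T16_apply (x : V16) (i : Fin 16) : T16 x i = x (i - 1) := by
  show x ((finRotate 16).symm i) = _
  rw [finRotate_symm_eq]

lemma ofNat_succ16 (k : ℕ) : Fin.ofNat 16 (k + 1) = Fin.ofNat 16 k + 1 := by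
  apply Fin.ext
  simp [Fin.ofNat, Fin.val_add]

lemma T16_pow_apply (k : ℕ) (x : V16) (i : Fin 16) : (T16 ^ k) x i = x (i - Fin.ofNat 16 k) := by
  induction k generalizing i with
  | zero => simp
  | succ k ih =>
    rw [pow_succ', Module.End.mul_apply, T16_apply, ih]
    rw [ofNat_succ16, sub_sub, add_comm]

lemma T16_pow16 : T16 ^ 16 = 1 := by
  ext1 x
  ext i
  simp [T16_pow_apply]

lemma T16_pow_mod (k : ℕ) : T16 ^ (k % 16) = T16 ^ k := by
  conv_rhs => rw [← Nat.mod_add_div k 16, pow_add, pow_mul, T16_pow16, one_pow, mul_one]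

/-- Embedding of the coordinate model generated by `s`. -/
def emb (d : ℕ) (s : V16) : (Fin d → ZMod 3) →ₗ[ZMod 3] V16 :=
  ∑ j : Fin d, (LinearMap.proj j : (Fin d → ZMod 3) →ₗ[ZMod 3] ZMod 3).smulRight ((T16 ^ (j : ℕ)) s)

lemma emb_apply (d : ℕ) (s : V16) (c : Fin d → ZMod 3) :
    emb d s c = ∑ j : Fin d, c j • (T16 ^ (j : ℕ)) s := by
  simp [emb]

lemma emb2_shift (ε : ZMod 3) (s : V16) (hs : (T16 ^ 2) s = ε • T16 s + s) (c) :
    emb 2 s (M2 ε c) = T16 (emb 2 s c) := by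
  have hs' : T16 (T16 s) = ε • T16 s + s := by rw [← hs, pow_two]; rfl
  simp only [emb_apply, Fin.sum_univ_two, M2]
  simp [hs']
  module

lemma emb4_shift (ε : ZMod 3) (s : V16) (hs : (T16 ^ 4) s = ε • (T16 ^ 2) s + s) (c) :
    emb 4 s (M4 ε c) = T16 (emb 4 s c) := by
  have h2 : T16 (T16 s) = (T16 ^ 2) s := by rw [pow_two]; rfl
  have h3 : T16 ((T16 ^ 2) s) = (T16 ^ 3) s := by rw [pow_succ' _ 2]; rfl
  have h4 : T16 ((T16 ^ 3) s) = ε • (T16 ^ 2) s + s := by rw [← hs, pow_succ' _ 3]; rfl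
  simp only [emb_apply, Fin.sum_univ_four, M4]
  simp [h2, h3, h4]
  module

lemma emb_iter {d : ℕ} (s : V16) (M : (Fin d → ZMod 3) → (Fin d → ZMod 3))
    (h : ∀ c, emb d s (M c) = T16 (emb d s c)) (i : ℕ) (c) :
    emb d s (M^[i] c) = (T16 ^ i) (emb d s c) := by
  induction i generalizing c with
  | zero => simp
  | succ i ih => rw [Function.iterate_succ_apply, ih, h, pow_succ]; rfl

def vA : V16 := ![1,1,1,1,1,1,1,1,1,1,1,1,1,1,1,1]
def vB : V16 := ![2,1,2,1,2,1,2,1,2,1,2,1,2,1,2,1]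
def vE : V16 := ![2,0,1,0,2,0,1,0,2,0,1,0,2,0,1,0]
def v2p : V16 := ![1, 2, 2, 0, 2, 1, 1, 0, 1, 2, 2, 0, 2, 1, 1, 0]
def v2m : V16 := ![1, 1, 2, 0, 2, 2, 1, 0, 1, 1, 2, 0, 2, 2, 1, 0]
def v4p : V16 := ![1, 0, 2, 0, 2, 0, 0, 0, 2, 0, 1, 0, 1, 0, 0, 0]
def v4m : V16 := ![1, 0, 1, 0, 2, 0, 0, 0, 2, 0, 2, 0, 1, 0, 0, 0]

lemma T16_pow_eq (k : ℕ) (x : V16) : (T16 ^ k) x = fun i => x (i - Fin.ofNat 16 k) :=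
  funext fun i => T16_pow_apply k x i

lemma T16_eq (x : V16) : T16 x = fun i => x (i - 1) := funext fun i => T16_apply x i

lemma rec2p : (T16 ^ 2) v2p = (1 : ZMod 3) • T16 v2p + v2p := by
  rw [T16_pow_eq, T16_eq]; decide +kernel
lemma rec2m : (T16 ^ 2) v2m = (2 : ZMod 3) • T16 v2m + v2m := by
  rw [T16_pow_eq, T16_eq]; decide +kernel
lemma rec4p : (T16 ^ 4) v4p = (1 : ZMod 3) • (T16 ^ 2) v4p + v4p := by
  rw [T16_pow_eq, T16_pow_eq]; decide +kernel
lemma rec4m : (T16 ^ 4) v4m = (2 : ZMod 3) • (T16 ^ 2) v4m + v4m := by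
  rw [T16_pow_eq, T16_pow_eq]; decide +kernel

lemma TA : T16 vA = vA := by rw [T16_eq]; decide +kernel
lemma TB : T16 vB = -vB := by rw [T16_eq]; decide +kernel
lemma TE : T16 (T16 vE) = -vE := by simp only [T16_eq]; decide +kernel

lemma decomp_s14 : (Pi.single 0 1 : V16) = vA - vB + vE + emb 2 v2p ![2, 1] + emb 2 v2m ![2, 2]
    + emb 4 v4p ![1, 0, 2, 0] + emb 4 v4m ![1, 0, 1, 0] := by
  simp only [emb_apply, T16_pow_eq]
  decide +kernel

/-! ### Main bound -/

/-- A `τ`-cyclic piece whose image under `π` is at most a line. -/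
def Good (π : V16 →ₗ[ZMod 3] Q) (x : V16) : Prop :=
  (∀ i, π ((T16 ^ i) x) = 0) ∨ ∃ q : Q, q ≠ 0 ∧
    (∀ i, π ((T16 ^ i) x) ∈ Submodule.span (ZMod 3) {q}) ∧
    ∃ y, (∀ i, π ((T16 ^ i) y) ∈ Submodule.span (ZMod 3) {q}) ∧
      ∀ i < 18, π ((T16 ^ i) y) = 0 → i % 4 < 2

lemma good_of {d : ℕ} (π : V16 →ₗ[ZMod 3] Q) (s : V16)
    (M : (Fin d → ZMod 3) → (Fin d → ZMod 3))
    (hM : ∀ c, emb d s (M c) = T16 (emb d s c))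
    (h : (∀ c, (π ∘ₗ emb d s) c = 0) ∨ ∃ q : Q, q ≠ 0 ∧
      (∀ c, (π ∘ₗ emb d s) c ∈ Submodule.span (ZMod 3) {q}) ∧
      ∃ c, ∀ i < 18, (π ∘ₗ emb d s) (M^[i] c) = 0 → i % 4 < 2) (c : Fin d → ZMod 3) :
    Good π (emb d s c) := by
  rcases h with h | ⟨q, hq, h1, y, hy⟩
  · left
    intro i
    rw [← emb_iter s M hM]
    exact h _
  · right
    refine ⟨q, hq, fun i => ?_, emb d s y, fun i => ?_, fun i hi hh => hy i hi ?_⟩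
    · rw [← emb_iter s M hM]
      exact h1 _
    · rw [← emb_iter s M hM]
      exact h1 _
    · rw [← emb_iter s M hM] at hh
      exact hh

lemma good_add (π : V16 →ₗ[ZMod 3] Q) (H : ∀ x, ∃ i < 16, π ((T16 ^ i) x) = 0) (x y : V16)
    (hx : Good π x) (hy : Good π y) : Good π (x + y) := by
  rcases hx with hx | ⟨q, hq, hx, a, ha, ha'⟩
  · rcases hy with hy | ⟨r, hr, hy, b, hb, hb'⟩
    · left
      intro i
      rw [map_add, map_add, hx, hy, add_zero]
    · right
      refine ⟨r, hr, fun i => ?_, b, hb, hb'⟩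
      rw [map_add, map_add, hx, zero_add]
      exact hy i
  · right
    rcases hy with hy | ⟨r, hr, hy, b, hb, hb'⟩
    · refine ⟨q, hq, fun i => ?_, a, ha, ha'⟩
      rw [map_add, map_add, hy, add_zero]
      exact hx i
    · by_cases hqr : r ∈ Submodule.span (ZMod 3) {q}
      · refine ⟨q, hq, fun i => ?_, a, ha, ha'⟩
        rw [map_add, map_add]
        exact Submodule.add_mem _ (hx i)
          ((Submodule.span_singleton_le_iff_mem _ _).mpr hqr (hy i))
      · exfalso
        obtain ⟨i, hi, h⟩ := H (a + (T16 ^ 2) b)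
        rw [map_add, map_add, ← Module.End.mul_apply, ← pow_add] at h
        have h1 := ha i
        have h2 := hb (i + 2)
        rw [Submodule.mem_span_singleton] at h1 h2 hqr
        obtain ⟨u, hu⟩ := h1
        obtain ⟨v, hv⟩ := h2
        have hv0 : v = 0 := by
          by_contra hv0
          apply hqr
          refine ⟨-(v⁻¹ * u), ?_⟩
          rw [← hu, ← hv] at h
          have h3 : r = v⁻¹ • (v • r) := by rw [smul_smul, inv_mul_cancel₀ hv0, one_smul]
          rw [h3, eq_neg_of_add_eq_zero_right h, neg_smul, smul_neg, smul_smul]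
        rw [hv0, zero_smul] at hv
        rw [← hv, add_zero] at h
        have := ha' i (by omega) h
        have := hb' (i + 2) (by omega) hv.symm
        omega

lemma main_bound (π : V16 →ₗ[ZMod 3] Q) (hπ : Function.Surjective π)
    (H : ∀ x, ∃ i < 16, π ((T16 ^ i) x) = 0) : Module.finrank (ZMod 3) Q ≤ 1 := by
  have hA : π vA = 0 := by
    obtain ⟨i, -, h⟩ := H vA
    have : ∀ i, (T16 ^ i) vA = vA := by
      intro i
      induction i with
      | zero => simp
      | succ i ih => rw [pow_succ, Module.End.mul_apply, TA, ih]
    rwa [this] at h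
  have hB : π vB = 0 := by
    obtain ⟨i, -, h⟩ := H vB
    have : ∀ i, π ((T16 ^ i) vB) = 0 → π vB = 0 := by
      intro i
      induction i with
      | zero => simp
      | succ i ih =>
        rw [pow_succ, Module.End.mul_apply, TB, map_neg, map_neg, neg_eq_zero]
        exact ih
    exact this i h
  have key : ∀ x, T16 (T16 x) = -x → π x = 0 ∨ π (T16 x) = 0 := by
    intro x hx
    obtain ⟨i, -, h⟩ := H x
    induction i using Nat.twoStepInduction with
    | zero => left; simpa using h
    | one => right; simpa using h
    | more i ih _ =>
      rw [pow_succ, pow_succ, Module.End.mul_apply, Module.End.mul_apply, hx, map_neg, map_neg,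
        neg_eq_zero] at h
      exact ih h
  have hE : π vE = 0 ∧ π (T16 vE) = 0 := by
    have h1 := key vE TE
    have h2 := key (vE + T16 vE) (by rw [map_add, map_add, TE, map_neg]; abel)
    rw [map_add, map_add, map_add, TE, map_neg] at h2
    rcases h1 with h1 | h1 <;> rw [h1] at h2 ⊢ <;> simpa using h2
  have gz : ∀ x, (∀ i, π ((T16 ^ i) x) = 0) → Good π x := fun x h => Or.inl h
  have gA : Good π (vA - vB + vE) := by
    rw [sub_eq_add_neg]
    refine good_add π H _ _ (good_add π H _ _ (gz _ ?_) (gz _ ?_)) (gz _ ?_)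
    · intro i
      induction i with
      | zero => simpa using hA
      | succ i ih => rwa [pow_succ, Module.End.mul_apply, TA]
    · intro i
      induction i with
      | zero => simpa using hB
      | succ i ih =>
        rw [pow_succ, Module.End.mul_apply, map_neg, TB, map_neg, map_neg, neg_eq_zero]
        exact ih
    · intro i
      induction i using Nat.twoStepInduction with
      | zero => simpa using hE.1
      | one => simpa using hE.2
      | more i ih _ =>
        rw [pow_succ, pow_succ, Module.End.mul_apply, Module.End.mul_apply, TE, map_neg, map_neg,
          neg_eq_zero]
        exact ih
  have g2 : ∀ (ε : ZMod 3) (s : V16), ε ≠ 0 → (T16 ^ 2) s = ε • T16 s + s → ∀ c, Good π (emb 2 s c) := by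
    intro ε s hε hs
    apply good_of π s (M2 ε) (emb2_shift ε s hs)
    apply comp2 ε hε
    intro c
    obtain ⟨i, hi, h⟩ := H (emb 2 s c)
    refine ⟨i, hi, ?_⟩
    rwa [LinearMap.comp_apply, emb_iter s (M2 ε) (emb2_shift ε s hs)]
  have g4 : ∀ (ε : ZMod 3) (s : V16), ε ≠ 0 → (T16 ^ 4) s = ε • (T16 ^ 2) s + s → ∀ c, Good π (emb 4 s c) := by
    intro ε s hε hs
    apply good_of π s (M4 ε) (emb4_shift ε s hs)
    apply comp4 ε hε
    intro c
    obtain ⟨i, hi, h⟩ := H (emb 4 s c)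
    refine ⟨i, hi, ?_⟩
    rwa [LinearMap.comp_apply, emb_iter s (M4 ε) (emb4_shift ε s hs)]
  have h1 : (1 : ZMod 3) ≠ 0 := by decide
  have h2 : (2 : ZMod 3) ≠ 0 := by decide
  have gfin : Good π (Pi.single 0 1) := by
    rw [decomp_s14]
    exact good_add π H _ _ (good_add π H _ _ (good_add π H _ _ (good_add π H _ _ gA
      (g2 1 _ h1 rec2p _)) (g2 2 _ h2 rec2m _)) (g4 1 _ h1 rec4p _)) (g4 2 _ h2 rec4m _)
  have hspan : ∃ q : Q, ∀ i, π ((T16 ^ i) (Pi.single 0 1)) ∈ Submodule.span (ZMod 3) {q} := by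
    rcases gfin with h | ⟨q, -, h, -⟩
    · exact ⟨0, fun i => by rw [h]; exact Submodule.zero_mem _⟩
    · exact ⟨q, h⟩
  obtain ⟨q, hq⟩ := hspan
  have hsingle : ∀ j : Fin 16, (T16 ^ (j : ℕ)) (Pi.single 0 1) = Pi.single j 1 := by
    intro j
    ext i
    rw [T16_pow_apply]
    simp [Pi.single_apply, sub_eq_zero]
  have htop : LinearMap.range π ≤ Submodule.span (ZMod 3) {q} := by
    rw [LinearMap.range_eq_map, ← (Pi.basisFun (ZMod 3) (Fin 16)).span_eq, Submodule.map_span,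
      Submodule.span_le]
    rintro _ ⟨_, ⟨j, rfl⟩, rfl⟩
    rw [Pi.basisFun_apply, ← hsingle]
    exact hq _
  rw [finrank_le_one_iff]
  refine ⟨q, fun w => ?_⟩
  obtain ⟨x, rfl⟩ := hπ w
  exact Submodule.mem_span_singleton.mp (htop ⟨x, rfl⟩)

lemma cover_bound (U : Submodule (ZMod 3) V16) (hU : IsCyclicallyCovering U) :
    16 - Module.finrank (ZMod 3) U ≤ 1 := by
  have h1 : Module.finrank (ZMod 3) (V16 ⧸ U) ≤ 1 := by
    apply main_bound U.mkQ (Submodule.mkQ_surjective U)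
    intro x
    have hx : x ∈ ⋃ i ∈ Finset.range 16, ⇑(cshift (ZMod 3) 16 ^ i) '' (U : Set V16) := by
      rw [show _ = Set.univ from hU]; trivial
    simp only [Set.mem_iUnion, Finset.mem_range] at hx
    obtain ⟨i, hi, y, hy, rfl⟩ := hx
    refine ⟨(16 - i) % 16, Nat.mod_lt _ (by norm_num), ?_⟩
    rw [T16_pow_mod, ← Module.End.mul_apply, ← pow_add, Nat.sub_add_cancel hi.le, T16_pow16]
    simpa using hy
  have h2 := Submodule.finrank_quotient_add_finrank U
  simp only [Module.finrank_fintype_fun_eq_card, Fintype.card_fin] at h2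
  omega

/-! ### A covering hyperplane -/

/-- The functional `x ↦ ∑ j, u_j x_j` with `u` an m-sequence of period 8. -/
def phi16 : V16 →ₗ[ZMod 3] ZMod 3 := dotProductBilin (ZMod 3) (ZMod 3) v2p

lemma phi16_apply (x : V16) : phi16 x = v2p ⬝ᵥ x := rfl

lemma phi16_rec (x : V16) : phi16 x = phi16 (T16 x) + phi16 (T16 (T16 x)) := by
  have h : phi16 = phi16 ∘ₗ T16 + phi16 ∘ₗ T16 ∘ₗ T16 := by
    apply (Pi.basisFun (ZMod 3) (Fin 16)).ext
    intro j
    simp only [Pi.basisFun_apply, LinearMap.add_apply, LinearMap.comp_apply, phi16_apply, T16_eq]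
    revert j
    decide +kernel
  exact LinearMap.congr_fun h x

lemma exists_cover : ∃ U : Submodule (ZMod 3) V16, IsCyclicallyCovering U ∧
      16 - Module.finrank (ZMod 3) U = 1 := by
  refine ⟨LinearMap.ker phi16, ?_, ?_⟩
  · refine Set.eq_univ_of_forall fun x => ?_
    have hz : ∃ i, 1 ≤ i ∧ i ≤ 4 ∧ phi16 ((T16 ^ i) x) = 0 := by
      have r : ∀ i, phi16 ((T16 ^ i) x) =
          phi16 ((T16 ^ (i + 1)) x) + phi16 ((T16 ^ (i + 2)) x) := by
        intro i
        rw [phi16_rec, pow_succ' _ (i + 1), pow_succ' _ i]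
        rfl
      have r1 := r 1
      have r2 := r 2
      norm_num at r1 r2
      have hd : ∀ a b c d : ZMod 3, a = b + c → b = c + d → a = 0 ∨ b = 0 ∨ c = 0 ∨ d = 0 := by
        decide +kernel
      rcases hd _ _ _ _ r1 r2 with h | h | h | h
      · exact ⟨1, by norm_num, by norm_num, by simpa using h⟩
      · exact ⟨2, by norm_num, by norm_num, h⟩
      · exact ⟨3, by norm_num, by norm_num, h⟩
      · exact ⟨4, by norm_num, by norm_num, h⟩
    obtain ⟨i, h1, h4, h⟩ := hz
    simp only [Set.mem_iUnion, Finset.mem_range]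
    refine ⟨16 - i, by omega, (T16 ^ i) x, h, ?_⟩
    rw [← Module.End.mul_apply, ← pow_add, Nat.sub_add_cancel (by omega), T16_pow16]
    rfl
  · have h2 := LinearMap.finrank_range_add_finrank_ker phi16
    have hs : LinearMap.range phi16 = ⊤ := by
      apply LinearMap.range_eq_top.mpr
      apply LinearMap.surjective
      intro h
      have := LinearMap.congr_fun h (Pi.single 0 1)
      rw [phi16_apply] at this
      simp [v2p] at this
    rw [hs] at h2
    simp at h2
    omega

/-- `h_3(16) = 1`: there exists a cyclically covering subspace of `𝔽_3^{16}` of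
codimension 1, but none of codimension 2. -/
theorem stmt14 :
    hcc (ZMod 3) 16 = 1 ∧
    (∃ U : Submodule (ZMod 3) (Fin 16 → ZMod 3), IsCyclicallyCovering U ∧
      16 - Module.finrank (ZMod 3) U = 1) ∧
    (∀ U : Submodule (ZMod 3) (Fin 16 → ZMod 3), IsCyclicallyCovering U →
      16 - Module.finrank (ZMod 3) U ≠ 2) := by
  refine ⟨?_, exists_cover, fun U hU h => ?_⟩
  · apply le_antisymm
    · apply csSup_le'
      rintro k ⟨U, hU, rfl⟩
      exact cover_bound U hU
    · refine le_csSup ⟨1, ?_⟩ exists_cover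
      rintro k ⟨U, hU, rfl⟩
      exact cover_bound U hU
  · have h' : 16 - Module.finrank (ZMod 3) U ≤ 1 := cover_bound U hU
    rw [h] at h'
    omega
end
end

section
/- Let q be a prime power and let m, n be positive integers. Let τ denote the cyclic shift operator on 𝔽_q^{mn} and let h_{τ^m}(𝔽_q^{mn}) denote the largest possible codimension of a subspace U ⊆ 𝔽_q^{mn} with ⋃_{k=0}^{n-1} τ^{mk}(U) = 𝔽_q^{mn}. If h_{q^m}(n) = k, then h_{τ^m}(𝔽_q^{mn}) ≥ mk. Consequently, if h_{τ^m}(𝔽_q^{mn}) ≤ m − 1, then h_{q^m}(n) = 0. -/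
noncomputable section

/-- `hTauM F m n` is the largest possible codimension of a subspace `U ⊆ F^{mn}` with
`⋃_{k=0}^{n-1} (τ^m)^k(U) = F^{mn}`, where `τ` is the cyclic shift on `F^{mn}`. -/
def hTauM (F : Type*) [Field F] (m n : ℕ) : ℕ :=
  sSup {k : ℕ | ∃ U : Submodule F (Fin (m * n) → F),
    (⋃ j ∈ Finset.range n,
      ⇑(cshift F (m * n) ^ (m * j)) '' (U : Set (Fin (m * n) → F))) = Set.univ ∧
    m * n - Module.finrank F U = k}

lemma aux_rot_val {N : ℕ} (i : Fin N) : (finRotate N i : ℕ) = (i + 1) % N := by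
  obtain _ | N := N
  · exact i.elim0
  · rw [finRotate_apply, Fin.val_add]
    simp

lemma aux_rot_pow_val {N : ℕ} (j : ℕ) (i : Fin N) :
    ((finRotate N ^ j) i : ℕ) = (i + j) % N := by
  induction j with
  | zero => simp [Nat.mod_eq_of_lt i.2]
  | succ j ih =>
    rw [pow_succ', Equiv.Perm.mul_apply, aux_rot_val, ih, Nat.mod_add_mod, add_assoc]

lemma aux_cshift_pow {F : Type*} [Field F] {N : ℕ} (j : ℕ) (a : Fin N → F) (i : Fin N) :
    (cshift F N ^ j) a ((finRotate N ^ j) i) = a i := by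
  induction j with
  | zero => simp
  | succ j ih =>
    rw [pow_succ', pow_succ', Equiv.Perm.mul_apply, Module.End.mul_apply]
    change (cshift F N ^ j) a ((finRotate N).symm (finRotate N ((finRotate N ^ j) i))) = a i
    rw [Equiv.symm_apply_apply, ih]

lemma aux_exists_algebra (F K : Type*) [Field F] [Fintype F] [Field K] [Fintype K]
    (m : ℕ) (hm : 0 < m) (hcardK : Fintype.card K = Fintype.card F ^ m) :
    ∃ _ : Algebra F K, Module.finrank F K = m := by
  obtain ⟨p, hp⟩ := CharP.exists F
  haveI : Fact p.Prime := ⟨CharP.char_is_prime F p⟩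
  haveI : NeZero m := ⟨hm.ne'⟩
  letI := ZMod.algebra F p
  letI := Fintype.ofFinite (FiniteField.Extension F p m)
  have hc : Fintype.card (FiniteField.Extension F p m) = Fintype.card K := by
    rw [← Nat.card_eq_fintype_card, FiniteField.natCard_extension, hcardK,
      Nat.card_eq_fintype_card]
  let e := FiniteField.ringEquivOfCardEq hc
  letI : Algebra F K := (e.toRingHom.comp (algebraMap F (FiniteField.Extension F p m))).toAlgebra
  refine ⟨inferInstance, ?_⟩
  have h := Module.card_eq_pow_finrank (K := F) (V := K)
  rw [hcardK] at h
  exact (Nat.pow_right_injective (Fintype.one_lt_card (α := F)) h).symm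

/-- The coordinate identification of `K^n` with `F^{mn}`. -/
def auxPhi {F K : Type*} [Field F] [Field K] [Algebra F K] {m n : ℕ}
    (e : K ≃ₗ[F] (Fin m → F)) : (Fin n → K) →ₗ[F] (Fin (m * n) → F) where
  toFun x i := e (x ⟨i / m, Nat.div_lt_of_lt_mul i.2⟩)
    ⟨i % m, Nat.mod_lt _ (Nat.pos_of_ne_zero (by rintro rfl; exact absurd i.2 (by simp)))⟩
  map_add' x y := by ext; simp
  map_smul' c x := by ext; simp

lemma auxPhi_injective {F K : Type*} [Field F] [Field K] [Algebra F K] {m n : ℕ}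
    (e : K ≃ₗ[F] (Fin m → F)) : Function.Injective (auxPhi (n := n) e) := by
  intro x y h
  ext a
  apply e.injective
  ext b
  have hlt : m * a + b < m * n := by
    have h1 : m * (a + 1) ≤ m * n := Nat.mul_le_mul_left m a.2
    have := b.2
    rw [Nat.mul_add] at h1
    omega
  have hb : 0 < m := by have := b.2; omega
  have := congrFun h ⟨m * a + b, hlt⟩
  simpa [auxPhi, Nat.mul_add_div hb, Nat.div_eq_of_lt b.2, Nat.mod_eq_of_lt b.2] using this

lemma auxPhi_shift {F K : Type*} [Field F] [Field K] [Algebra F K] {m n : ℕ}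
    (e : K ≃ₗ[F] (Fin m → F)) (j : ℕ) (x : Fin n → K) :
    auxPhi e ((cshift K n ^ j) x) = (cshift F (m * n) ^ (m * j)) (auxPhi e x) := by
  ext i'
  obtain ⟨i, rfl⟩ := (finRotate (m * n) ^ (m * j)).surjective i'
  rw [aux_cshift_pow]
  have hm : 0 < m := Nat.pos_of_ne_zero (by rintro rfl; exact absurd i.2 (by simp))
  have h1 : (⟨((finRotate (m * n) ^ (m * j)) i : ℕ) / m, Nat.div_lt_of_lt_mul (Fin.is_lt _)⟩ : Fin n)
      = (finRotate n ^ j) ⟨i / m, Nat.div_lt_of_lt_mul i.2⟩ := by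
    apply Fin.ext
    simp only [aux_rot_pow_val]
    rw [Nat.mod_mul_right_div_self, Nat.add_mul_div_left _ _ hm]
  have h2 : ((finRotate (m * n) ^ (m * j)) i : ℕ) % m = i % m := by
    rw [aux_rot_pow_val, Nat.mod_mul_right_mod, Nat.add_mul_mod_self_left]
  simp only [auxPhi, LinearMap.coe_mk, AddHom.coe_mk, h1, h2, aux_cshift_pow]

/-- Let `q` be a prime power and `m, n` positive integers.  If `h_{q^m}(n) = k`, then
`h_{τ^m}(𝔽_q^{mn}) ≥ mk`.  Consequently, if `h_{τ^m}(𝔽_q^{mn}) ≤ m - 1`, then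
`h_{q^m}(n) = 0`.  (Here `K` is the field with `q^m` elements.) -/
theorem stmt15 (F K : Type*) [Field F] [Fintype F] [Field K] [Fintype K]
    (m n : ℕ) (hm : 0 < m) (hn : 0 < n)
    (hcardK : Fintype.card K = Fintype.card F ^ m)
    (k : ℕ) (hk : hcc K n = k) :
    m * k ≤ hTauM F m n ∧ (hTauM F m n ≤ m - 1 → hcc K n = 0) := by
  have hmain : m * k ≤ hTauM F m n := by
    obtain ⟨_, hfr⟩ := aux_exists_algebra F K m hm hcardK
    have hmem := Nat.sSup_mem (s := {k : ℕ | ∃ U : Submodule K (Fin n → K),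
        IsCyclicallyCovering U ∧ n - Module.finrank K U = k})
      ⟨_, ⊤, by
        unfold IsCyclicallyCovering
        rw [Set.eq_univ_iff_forall]
        intro x
        simp only [Set.mem_iUnion]
        exact ⟨0, Finset.mem_range.2 hn, x, trivial, by simp⟩, rfl⟩
      ⟨n, by rintro _ ⟨U, -, rfl⟩; exact Nat.sub_le _ _⟩
    obtain ⟨U, hU, hcod⟩ := hmem
    have hcod' : n - Module.finrank K U = k := hcod.trans hk
    have e : K ≃ₗ[F] (Fin m → F) := LinearEquiv.ofFinrankEq _ _ (by simp [hfr])
    have hinj := auxPhi_injective (n := n) e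
    have hsurj : Function.Surjective (auxPhi (n := n) e) := by
      refine (LinearMap.injective_iff_surjective_of_finrank_eq_finrank ?_).1 hinj
      rw [Module.finrank_pi_fintype]
      simp [hfr, mul_comm]
    unfold hTauM
    refine le_csSup ⟨m * n, by rintro _ ⟨U, -, rfl⟩; exact Nat.sub_le _ _⟩
      ⟨(U.restrictScalars F).map (auxPhi e), ?_, ?_⟩
    · rw [Set.eq_univ_iff_forall]
      intro y
      obtain ⟨x, rfl⟩ := hsurj y
      have hx : x ∈ ⋃ i ∈ Finset.range n, ⇑(cshift K n ^ i) '' (U : Set (Fin n → K)) := by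
        rw [show _ = _ from hU]; trivial
      simp only [Set.mem_iUnion] at hx ⊢
      obtain ⟨j, hj, u, hu, rfl⟩ := hx
      exact ⟨j, hj, auxPhi e u, ⟨u, hu, rfl⟩, (auxPhi_shift e j u).symm⟩
    · have h1 : Module.finrank F ((U.restrictScalars F).map (auxPhi e))
          = Module.finrank F (U.restrictScalars F) :=
        (Submodule.equivMapOfInjective (auxPhi e) hinj (U.restrictScalars F)).finrank_eq.symm
      have h2 : Module.finrank F (U.restrictScalars F) = m * Module.finrank K U := by
        rw [← hfr]
        exact (Module.finrank_mul_finrank F K U).symm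
      rw [h1, h2, ← Nat.mul_sub, hcod']
  refine ⟨hmain, fun h => ?_⟩
  rw [hk]
  by_contra hk0
  have : m * 1 ≤ m * k := Nat.mul_le_mul_left m (Nat.pos_of_ne_zero hk0)
  omega
end
end

section
/- Let q be a prime power and let m, n be positive integers. Let τ denote the cyclic shift operator on 𝔽_q^{mn}. Then h_{τ^m}(𝔽_q^{mn}) ≤ ⌊log_q(n)⌋. -/
noncomputable section

/-- Let `q` be a prime power and `m, n` positive integers.  Then
`h_{τ^m}(𝔽_q^{mn}) ≤ ⌊log_q(n)⌋`. -/
theorem stmt16 (F : Type*) [Field F] [Fintype F]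
    (m n : ℕ) (hm : 0 < m) (hn : 0 < n) :
    hTauM F m n ≤ Nat.log (Fintype.card F) n := by
  classical
  have hq : 1 < Fintype.card F := Fintype.one_lt_card
  have key : ∀ k ∈ {k : ℕ | ∃ U : Submodule F (Fin (m * n) → F),
    (⋃ j ∈ Finset.range n,
      ⇑(cshift F (m * n) ^ (m * j)) '' (U : Set (Fin (m * n) → F))) = Set.univ ∧
    m * n - Module.finrank F U = k}, k ≤ Nat.log (Fintype.card F) n := by
    rintro k ⟨U, hU, rfl⟩
    apply Nat.le_log_of_pow_le hq
    have hd : Module.finrank F U ≤ m * n := by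
      simpa using Submodule.finrank_le U
    have h1 : (Set.univ : Set (Fin (m * n) → F)).ncard
        ≤ ∑ j ∈ Finset.range n,
          (⇑(cshift F (m * n) ^ (m * j)) '' (U : Set (Fin (m * n) → F))).ncard := by
      rw [← hU]
      exact Finset.set_ncard_biUnion_le _ _
    have h2 : ∑ j ∈ Finset.range n,
          (⇑(cshift F (m * n) ^ (m * j)) '' (U : Set (Fin (m * n) → F))).ncard
        ≤ n * Fintype.card F ^ Module.finrank F U := by
      calc _ ≤ ∑ j ∈ Finset.range n, Fintype.card F ^ Module.finrank F U := by
            apply Finset.sum_le_sum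
            intro j _
            refine (Set.ncard_image_le (Set.toFinite _)).trans ?_
            rw [← Nat.card_coe_set_eq]
            have := Module.natCard_eq_pow_finrank (K := F) (V := U)
            rw [Nat.card_eq_fintype_card (α := F)] at this
            exact this.le
        _ = _ := by simp
    have h3 : (Set.univ : Set (Fin (m * n) → F)).ncard = Fintype.card F ^ (m * n) := by
      simp [Set.ncard_univ]
    rw [h3] at h1
    have h4 := h1.trans h2
    have hp : 0 < Fintype.card F ^ Module.finrank F U := by positivity
    refine Nat.le_of_mul_le_mul_right ?_ hp
    rw [← pow_add, Nat.sub_add_cancel hd]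
    exact h4
  unfold hTauM
  apply csSup_le' key
end
end
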